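/- arXiv:2202.12846 — 4 statements merged into one kernel-verified Lean document; each statement's English description precedes it below -/
import Mathlib

section
/- Let σ : ℝ → ℝ be measurable and polynomially bounded. Then for every fixed k ∈ ℕ, |Σ_{1-ε}^{(k)}(0) − Σ_1^{(k)}(0)| = O(ε) as ε → 0⁺, where Σ_v denotes the v-Gaussian smoothing of σ and Σ_v^{(k)} its k-th derivative. -/
open MeasureTheory ProbabilityTheory Filter Finset Asymptotics
open scoped NNReal ENNReal

noncomputable section

/-- The ±1 value encoded by a Boolean bit. -/
def bsign (b : Bool) : ℝ := if b then 1 else -1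

/-- Expectation over a uniformly random point of the Boolean cube `{±1}^n`. -/
def bExp (n : ℕ) (g : (Fin n → Bool) → ℝ) : ℝ :=
  (∑ x : Fin n → Bool, g x) / 2 ^ n

/-- A function on the Boolean cube is Boolean(-valued) if it takes values in `{±1}`. -/
def IsBooleanFn {n : ℕ} (f : (Fin n → Bool) → ℝ) : Prop := ∀ x, f x = 1 ∨ f x = -1

/-- Initialization distribution: the weights `w : ℝⁿ` and the bias `b` are
iid `N(0, 1/n)` Gaussians. -/
def initMeasure (n : ℕ) : Measure ((Fin n → ℝ) × ℝ) :=
  (Measure.pi fun _ : Fin n => gaussianReal 0 (n : ℝ≥0)⁻¹).prod (gaussianReal 0 (n : ℝ≥0)⁻¹)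

/-- Initial alignment `INAL(f, σ) = E_{w,b} [ (E_x [f(x) σ(wᵀx + b)])² ]`. -/
def INAL (n : ℕ) (f : (Fin n → Bool) → ℝ) (σ : ℝ → ℝ) : ℝ :=
  ∫ θ : (Fin n → ℝ) × ℝ,
    (bExp n fun x => f x * σ (∑ i, θ.1 i * bsign (x i) + θ.2)) ^ 2 ∂ initMeasure n

/-- The `v`-Gaussian smoothing `Σ_v(t) = E_{Y ∼ N(0,v)} [σ(Y + t)]`. -/
def gsmooth (σ : ℝ → ℝ) (v : ℝ) (t : ℝ) : ℝ :=
  ∫ y, σ (y + t) ∂ gaussianReal 0 v.toNNReal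

/-- `σ` is polynomially bounded: `|σ(x)| ≤ C |x|^c + C` for some `C, c > 0`. -/
def PolyBounded (σ : ℝ → ℝ) : Prop :=
  ∃ C : ℝ, 0 < C ∧ ∃ c : ℕ, 0 < c ∧ ∀ x : ℝ, |σ x| ≤ C * |x| ^ c + C

/-- `σ` is expressive: measurable, polynomially bounded, and its Gaussian smoothing has no
two consecutive vanishing derivatives at `0`. -/
def Expressive (σ : ℝ → ℝ) : Prop :=
  Measurable σ ∧ PolyBounded σ ∧
    ∀ m : ℕ, iteratedDeriv m (gsmooth σ 1) 0 ≠ 0 ∨ iteratedDeriv (m + 1) (gsmooth σ 1) 0 ≠ 0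

/-- A nonnegative sequence is negligible if it decays faster than any inverse polynomial. -/
def Negligible (g : ℕ → ℝ) : Prop :=
  ∀ c : ℕ, Tendsto (fun n : ℕ => (n : ℝ) ^ c * g n) atTop (nhds 0)

/-- Fourier character `M_S(x) = ∏_{i ∈ S} x_i`. -/
def chi {n : ℕ} (S : Finset (Fin n)) (x : Fin n → Bool) : ℝ := ∏ i ∈ S, bsign (x i)

/-- Fourier coefficient `f̂(S) = E_x [f(x) M_S(x)]`. -/
def fourierCoef (n : ℕ) (f : (Fin n → Bool) → ℝ) (S : Finset (Fin n)) : ℝ :=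
  bExp n fun x => f x * chi S x

/-- Fourier weight up to degree `k`: `W^{≤k}(f)`. -/
def weightLE (n k : ℕ) (f : (Fin n → Bool) → ℝ) : ℝ :=
  ∑ S ∈ Finset.univ.filter (fun S : Finset (Fin n) => S.card ≤ k), fourierCoef n f S ^ 2

/-- Fourier weight strictly below degree `k`: `W^{<k}(f)`. -/
def weightLT (n k : ℕ) (f : (Fin n → Bool) → ℝ) : ℝ :=
  ∑ S ∈ Finset.univ.filter (fun S : Finset (Fin n) => S.card < k), fourierCoef n f S ^ 2

/-- The monomial `M_k(x) = ∏_{i=1}^k x_i`, viewed as a function on `{±1}^n`. -/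
def monomial (n k : ℕ) : (Fin n → Bool) → ℝ :=
  fun x => ∏ i ∈ Finset.univ.filter (fun i : Fin n => (i : ℕ) < k), bsign (x i)

/-- The `N`-extension of `f : {±1}^n → ℝ` (for `n ≤ N`): ignore the last `N - n` coordinates. -/
def extendFn (n N : ℕ) (f : (Fin n → Bool) → ℝ) : (Fin N → Bool) → ℝ :=
  fun x => f fun i => if h : (i : ℕ) < N then x ⟨i, h⟩ else false

/-- Cross-predictability of (the uniform distribution on) the orbit of `f` under coordinate
permutations, with uniform inputs: `CP(orb(f), U^N)`. -/
def orbitCP (N : ℕ) (f : (Fin N → Bool) → ℝ) : ℝ :=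
  (∑ π : Equiv.Perm (Fin N), ∑ π' : Equiv.Perm (Fin N),
      (bExp N fun x => f (fun i => x (π i)) * f (fun i => x (π' i))) ^ 2) /
    (Fintype.card (Equiv.Perm (Fin N))) ^ 2

/-- `N = n^{1+ε}` (rounded up). -/
def Ndim (ε : ℝ) (n : ℕ) : ℕ := ⌈(n : ℝ) ^ (1 + ε)⌉₊

def gsKer (σ : ℝ → ℝ) (n : ℕ) (v s x : ℝ) : ℝ :=
  σ x * (x - s) ^ n * Real.exp (-(x - s) ^ 2 / (2 * v))

def gsInt (σ : ℝ → ℝ) (n : ℕ) (v s : ℝ) : ℝ := ∫ x, gsKer σ n v s x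

lemma gsKer_bound (σ : ℝ → ℝ) (hpb : PolyBounded σ) (n : ℕ) (R : ℝ) (hR : 0 ≤ R) :
    ∃ K : ℝ, 0 ≤ K ∧ ∀ v ∈ Set.Ioo (1/2 : ℝ) 2, ∀ s : ℝ, |s| ≤ R → ∀ x : ℝ,
      |gsKer σ n v s x| ≤ K * Real.exp (-(1/16) * x ^ 2) := by
  obtain ⟨C, hC, c, -, hσ⟩ := hpb
  refine ⟨2 * C * (1 + R) ^ n * ((c + n).factorial * (Real.exp 5 * Real.exp (R ^ 2 / 4))),
    by positivity, ?_⟩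
  intro v hv s hs x
  have hx := abs_nonneg x
  have h1 : |σ x| ≤ 2 * C * (1 + |x|) ^ c := by
    have a : |x| ^ c ≤ (1 + |x|) ^ c := by gcongr; linarith
    have b : 1 ≤ (1 + |x|) ^ c := one_le_pow₀ (by linarith)
    nlinarith [hσ x]
  have h2 : |x - s| ^ n ≤ (1 + R) ^ n * (1 + |x|) ^ n := by
    rw [← mul_pow]
    have := abs_sub x s
    gcongr
    nlinarith
  have h3 : -(x - s) ^ 2 / (2 * v) ≤ -(1/8) * x ^ 2 + R ^ 2 / 4 := by
    have hv0 : 0 < v := by linarith [hv.1]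
    have hs2 : s ^ 2 ≤ R ^ 2 := by rw [← sq_abs s]; gcongr
    have : -(x - s) ^ 2 / (2 * v) ≤ -(x - s) ^ 2 / 4 := by
      rw [neg_div, neg_div, neg_le_neg_iff]
      apply div_le_div_of_nonneg_left (sq_nonneg _) (by linarith) (by linarith [hv.2])
    nlinarith [sq_nonneg (x - 2 * s)]
  have h4 : (1 + |x|) ^ (c + n) ≤ (c + n).factorial * Real.exp (1 + |x|) := by
    have := Real.pow_div_factorial_le_exp (1 + |x|) (by linarith) (c + n)
    rwa [div_le_iff₀' (by positivity)] at this
  have h5 : Real.exp (1 + |x|) * Real.exp (-(x - s) ^ 2 / (2 * v)) ≤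
      Real.exp 5 * Real.exp (R ^ 2 / 4) * Real.exp (-(1/16) * x ^ 2) := by
    rw [← Real.exp_add, ← Real.exp_add, ← Real.exp_add]
    apply Real.exp_le_exp.mpr
    nlinarith [sq_nonneg (|x| - 8), sq_abs x]
  unfold gsKer
  rw [abs_mul, abs_mul, abs_pow, Real.abs_exp]
  calc |σ x| * |x - s| ^ n * Real.exp (-(x - s) ^ 2 / (2 * v))
      ≤ (2 * C * (1 + |x|) ^ c) * ((1 + R) ^ n * (1 + |x|) ^ n) *
          Real.exp (-(x - s) ^ 2 / (2 * v)) := by gcongr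
    _ = 2 * C * (1 + R) ^ n * ((1 + |x|) ^ (c + n) * Real.exp (-(x - s) ^ 2 / (2 * v))) := by
        rw [pow_add]; ring
    _ ≤ 2 * C * (1 + R) ^ n * (((c + n).factorial * Real.exp (1 + |x|)) *
          Real.exp (-(x - s) ^ 2 / (2 * v))) := by gcongr
    _ = 2 * C * (1 + R) ^ n * ((c + n).factorial * (Real.exp (1 + |x|) *
          Real.exp (-(x - s) ^ 2 / (2 * v)))) := by ring
    _ ≤ 2 * C * (1 + R) ^ n * ((c + n).factorial * (Real.exp 5 * Real.exp (R ^ 2 / 4) *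
          Real.exp (-(1/16) * x ^ 2))) := by gcongr
    _ = _ := by ring

lemma gsKer_meas (σ : ℝ → ℝ) (hm : Measurable σ) (n : ℕ) (v s : ℝ) :
    Measurable (gsKer σ n v s) := by
  unfold gsKer
  fun_prop

lemma gsKer_integrable (σ : ℝ → ℝ) (hm : Measurable σ) (hpb : PolyBounded σ) (n : ℕ) (v s : ℝ)
    (hv : v ∈ Set.Ioo (1/2 : ℝ) 2) : Integrable (gsKer σ n v s) := by
  obtain ⟨K, -, h⟩ := gsKer_bound σ hpb n |s| (abs_nonneg s)
  refine Integrable.mono' ((integrable_exp_neg_mul_sq (b := 1/16) (by norm_num)).const_mul K)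
    (gsKer_meas σ hm n v s).aestronglyMeasurable (ae_of_all _ fun x => ?_)
  exact h v hv s le_rfl x

lemma gsInt_hasDerivAt_s (σ : ℝ → ℝ) (hm : Measurable σ) (hpb : PolyBounded σ) (n : ℕ) (v s : ℝ)
    (hv : v ∈ Set.Ioo (1/2 : ℝ) 2) :
    HasDerivAt (gsInt σ n v) (-n * gsInt σ (n - 1) v s + v⁻¹ * gsInt σ (n + 1) v s) s := by
  have hv0 : 0 < v := by linarith [hv.1]
  obtain ⟨K, hK, h⟩ := gsKer_bound σ hpb (n - 1) (|s| + 1) (by positivity)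
  obtain ⟨K', hK', h'⟩ := gsKer_bound σ hpb (n + 1) (|s| + 1) (by positivity)
  have key := hasDerivAt_integral_of_dominated_loc_of_deriv_le (μ := (volume : Measure ℝ))
    (F := fun s x => gsKer σ n v s x)
    (F' := fun s x => -n * gsKer σ (n - 1) v s x + v⁻¹ * gsKer σ (n + 1) v s x)
    (bound := fun x => (n * K + v⁻¹ * K') * Real.exp (-(1/16) * x ^ 2))
    (Metric.ball_mem_nhds s one_pos)
    (Eventually.of_forall fun t => (gsKer_meas σ hm n v t).aestronglyMeasurable)
    (gsKer_integrable σ hm hpb n v s hv)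
    (((gsKer_meas σ hm _ v s).const_mul _).add
      ((gsKer_meas σ hm _ v s).const_mul _)).aestronglyMeasurable
    (ae_of_all _ fun x t ht => ?_)
    ((integrable_exp_neg_mul_sq (b := 1/16) (by norm_num)).const_mul _)
    (ae_of_all _ fun x t ht => ?_)
  · have e := key.2
    rw [integral_add ((gsKer_integrable σ hm hpb _ v s hv).const_mul _)
      ((gsKer_integrable σ hm hpb _ v s hv).const_mul _), integral_const_mul,
      integral_const_mul] at e
    exact e
  · have ht' : |t| ≤ |s| + 1 := by
      rw [Metric.mem_ball, Real.dist_eq] at ht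
      have := abs_sub_abs_le_abs_sub t s
      linarith
    refine (norm_add_le _ _).trans ?_
    rw [norm_mul, norm_mul, norm_neg, Real.norm_natCast, Real.norm_eq_abs, Real.norm_eq_abs,
      Real.norm_eq_abs, abs_of_pos (inv_pos.mpr hv0), add_mul, mul_assoc, mul_assoc]
    have a := h v hv t ht' x
    have b := h' v hv t ht' x
    gcongr
  · have h1 : HasDerivAt (fun t : ℝ => x - t) (-1) t := by
      simpa using (hasDerivAt_id t).const_sub x
    have h2 := ((h1.pow n).const_mul (σ x)).mul ((((h1.pow 2).neg).div_const (2 * v)).exp)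
    refine (h2.congr_deriv ?_)
    simp only [gsKer, Pi.pow_apply, Pi.neg_apply]
    field_simp
    push_cast
    ring

lemma gsInt_hasDerivAt_v (σ : ℝ → ℝ) (hm : Measurable σ) (hpb : PolyBounded σ) (n : ℕ) (v s : ℝ)
    (hv : v ∈ Set.Ioo (1/2 : ℝ) 2) :
    DifferentiableAt ℝ (fun w => gsInt σ n w s) v := by
  obtain ⟨K, hK, h⟩ := gsKer_bound σ hpb (n + 2) |s| (by positivity)
  have key := hasDerivAt_integral_of_dominated_loc_of_deriv_le (μ := (volume : Measure ℝ))
    (F := fun w x => gsKer σ n w s x)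
    (F' := fun w x => (2 * w ^ 2)⁻¹ * gsKer σ (n + 2) w s x)
    (bound := fun x => 2 * (K * Real.exp (-(1/16) * x ^ 2)))
    (Ioo_mem_nhds hv.1 hv.2)
    (Eventually.of_forall fun t => (gsKer_meas σ hm n t s).aestronglyMeasurable)
    (gsKer_integrable σ hm hpb n v s hv)
    ((gsKer_meas σ hm _ v s).const_mul _).aestronglyMeasurable
    (ae_of_all _ fun x t ht => ?_)
    (((integrable_exp_neg_mul_sq (b := 1/16) (by norm_num)).const_mul _).const_mul _)
    (ae_of_all _ fun x t ht => ?_)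
  · exact key.2.differentiableAt
  · have ht0 : 0 < t := by linarith [ht.1]
    rw [norm_mul, Real.norm_eq_abs, Real.norm_eq_abs, abs_of_pos (by positivity)]
    have a := h t ht s le_rfl x
    have b : (2 * t ^ 2)⁻¹ ≤ 2 := by
      rw [inv_le_comm₀ (by positivity) (by norm_num)]
      nlinarith [ht.1]
    gcongr
  · have ht0 : 0 < t := by linarith [ht.1]
    have h1 : HasDerivAt (fun t : ℝ => 2 * t) 2 t := by
      simpa using (hasDerivAt_id t).const_mul 2
    have h2 := (((hasDerivAt_const t (-(x - s) ^ 2)).div h1 (by positivity)).exp).const_mul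
      (σ x * (x - s) ^ n)
    refine (h2.congr_deriv ?_)
    simp only [gsKer, Pi.div_apply]
    field_simp
    ring

lemma gsInt_deriv (σ : ℝ → ℝ) (hm : Measurable σ) (hpb : PolyBounded σ) (n : ℕ) (v : ℝ)
    (hv : v ∈ Set.Ioo (1/2 : ℝ) 2) :
    deriv (gsInt σ n v) =
      fun s => (-n : ℝ) * gsInt σ (n - 1) v s + v⁻¹ * gsInt σ (n + 1) v s :=
  funext fun s => (gsInt_hasDerivAt_s σ hm hpb n v s hv).deriv

lemma gsInt_contDiff (σ : ℝ → ℝ) (hm : Measurable σ) (hpb : PolyBounded σ) (v : ℝ)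
    (hv : v ∈ Set.Ioo (1/2 : ℝ) 2) (k : ℕ) : ∀ n, ContDiff ℝ k (gsInt σ n v) := by
  induction k with
  | zero =>
    intro n
    exact contDiff_zero.mpr (Differentiable.continuous (𝕜 := ℝ)
      fun s => (gsInt_hasDerivAt_s σ hm hpb n v s hv).differentiableAt)
  | succ k ih =>
    intro n
    push_cast
    rw [contDiff_succ_iff_deriv]
    refine ⟨fun s => (gsInt_hasDerivAt_s σ hm hpb n v s hv).differentiableAt, by simp, ?_⟩
    rw [gsInt_deriv σ hm hpb n v hv]
    exact (contDiff_const.mul (ih _)).add (contDiff_const.mul (ih _))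

lemma gsInt_iter_diff (σ : ℝ → ℝ) (hm : Measurable σ) (hpb : PolyBounded σ) (k : ℕ) :
    ∀ n, DifferentiableAt ℝ (fun v => iteratedDeriv k (gsInt σ n v) 0) 1 := by
  induction k with
  | zero =>
    intro n
    simpa using gsInt_hasDerivAt_v σ hm hpb n 1 0 (by norm_num)
  | succ k ih =>
    intro n
    have hd : DifferentiableAt ℝ (fun v : ℝ => (-n : ℝ) * iteratedDeriv k (gsInt σ (n - 1) v) 0
        + v⁻¹ * iteratedDeriv k (gsInt σ (n + 1) v) 0) 1 :=
      ((ih _).const_mul _).add ((differentiableAt_inv one_ne_zero).mul (ih _))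
    refine hd.congr_of_eventuallyEq ?_
    filter_upwards [Ioo_mem_nhds (show (1/2 : ℝ) < 1 by norm_num) (show (1 : ℝ) < 2 by norm_num)]
      with v hv
    rw [iteratedDeriv_succ', gsInt_deriv σ hm hpb n v hv,
      iteratedDeriv_fun_add
        (contDiff_const.mul (gsInt_contDiff σ hm hpb v hv k _)).contDiffAt
        (contDiff_const.mul (gsInt_contDiff σ hm hpb v hv k _)).contDiffAt,
      iteratedDeriv_const_mul_field, iteratedDeriv_const_mul_field]

lemma gsmooth_eq_gsInt (σ : ℝ → ℝ) (v : ℝ) (hv : 0 < v) :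
    gsmooth σ v = fun t => (√(2 * Real.pi * v))⁻¹ * gsInt σ 0 v t := by
  funext t
  unfold gsmooth gsInt
  rw [integral_gaussianReal_eq_integral_smul (by simpa using hv),
    ← integral_sub_right_eq_self _ t, ← integral_const_mul]
  congr 1
  funext x
  simp only [gaussianPDFReal_def, gsKer, Real.coe_toNNReal v hv.le, smul_eq_mul, sub_add_cancel,
    sub_zero, pow_zero]
  ring

/-- For measurable, polynomially bounded `σ` and every fixed `k`,
`|Σ_{1-ε}^{(k)}(0) − Σ_1^{(k)}(0)| = O(ε)` as `ε → 0⁺`. -/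
theorem gsmooth_iteratedDeriv_continuity_at_one
    (σ : ℝ → ℝ) (hmeas : Measurable σ) (hpb : PolyBounded σ) (k : ℕ) :
    (fun ε : ℝ =>
        iteratedDeriv k (gsmooth σ (1 - ε)) 0 - iteratedDeriv k (gsmooth σ 1) 0)
      =O[nhdsWithin 0 (Set.Ioi 0)] (id : ℝ → ℝ) := by
  have hd : DifferentiableAt ℝ (fun v => iteratedDeriv k (gsmooth σ v) 0) 1 := by
    have h1 : DifferentiableAt ℝ (fun v : ℝ => (√(2 * Real.pi * v))⁻¹ *
        iteratedDeriv k (gsInt σ 0 v) 0) 1 := by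
      have hpi : 2 * Real.pi * (1 : ℝ) ≠ 0 := by positivity
      refine DifferentiableAt.mul (DifferentiableAt.inv (DifferentiableAt.sqrt ?_ hpi) ?_)
        (gsInt_iter_diff σ hmeas hpb k 0)
      · fun_prop
      · positivity
    refine h1.congr_of_eventuallyEq ?_
    filter_upwards [Ioi_mem_nhds (show (0 : ℝ) < 1 by norm_num)] with v hv
    rw [gsmooth_eq_gsInt σ v hv, iteratedDeriv_const_mul_field]
  have hd' : DifferentiableAt ℝ (fun ε : ℝ => iteratedDeriv k (gsmooth σ (1 - ε)) 0) 0 := by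
    have h0 : DifferentiableAt ℝ (fun v => iteratedDeriv k (gsmooth σ v) 0) (1 - 0) := by
      simpa using hd
    exact h0.comp (0 : ℝ) (f := fun ε : ℝ => 1 - ε) (by fun_prop)
  have := hd'.isBigO_sub
  simp only [sub_zero] at this
  exact this.mono nhdsWithin_le_nhds
end
end

section
/- Fix k ≥ 1 and n ≥ k. Let w_1,…,w_k, b be i.i.d. N(0,1/n), let x_1,…,x_k be i.i.d. uniform on {±1}, independent of the weights, and let G = Σ_{i=1}^k w_i x_i + b and M(x) = ∏_{i=1}^k x_i. Fix signs τ_1,…,τ_k, s ∈ {±1} and condition on sign(w_i) = τ_i for all i and sign(b) = s. Then for every ν ∈ ℕ: if ν < k the conditional expectation E[M(x)·G^ν | τ, s] = 0, while if ν ≥ k it equals (∏_{i=1}^k τ_i)·s^{(ν-k) mod 2}·C(ν)·n^{-ν/2} for a constant C(ν) > 0 depending only on k and ν (not on n or the signs). -/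
open MeasureTheory ProbabilityTheory Filter Finset Asymptotics
open scoped NNReal ENNReal

noncomputable section

/-- The distribution of `(|w_1|, …, |w_k|, |b|)` is generated from `k + 1` iid `N(0, 1/n)`
variables (of which we take absolute values below). -/
def weightMeasure (n k : ℕ) : Measure ((Fin k → ℝ) × ℝ) :=
  (Measure.pi fun _ : Fin k => gaussianReal 0 (n : ℝ≥0)⁻¹).prod (gaussianReal 0 (n : ℝ≥0)⁻¹)

/-- `G = Σ_{i=1}^k τ_i |w_i| x_i + s |b|`, i.e. `Σ w_i x_i + b` conditioned
on `sign(w_i) = τ_i` and `sign(b) = s`. -/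
def Gval (k : ℕ) (τ : Fin k → ℝ) (s : ℝ) (g : (Fin k → ℝ) × ℝ) (x : Fin k → Bool) : ℝ :=
  ∑ i, τ i * |g.1 i| * bsign (x i) + s * |g.2|

/-- The conditional expectation `E[M_k(x) · F(G) | sign(w) = τ, sign(b) = s]`,
taken over `|w_1|, …, |w_k|, |b|` and uniform `x ∈ {±1}^k`. -/
def condExpFn (n k : ℕ) (τ : Fin k → ℝ) (s : ℝ) (F : ℝ → ℝ) : ℝ :=
  ∫ g : (Fin k → ℝ) × ℝ,
    (bExp k fun x => (∏ i, bsign (x i)) * F (Gval k τ s g x)) ∂ weightMeasure n k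

/-- The conditional moment `E[M_k(x) · G^ν | sign(w) = τ, sign(b) = s]`. -/
def condMoment (n k : ℕ) (τ : Fin k → ℝ) (s : ℝ) (ν : ℕ) : ℝ :=
  condExpFn n k τ s fun z => z ^ ν

/-- `s` is a sign. -/
def IsSign (s : ℝ) : Prop := s = 1 ∨ s = -1

/-- The degree-`P` Taylor remainder of the `v`-Gaussian smoothing `Σ_v` at `0`:
`R(z) = Σ_v(z) − Σ_{ν=0}^P Σ_v^{(ν)}(0)/ν! · z^ν`. -/
def taylorRem (σ : ℝ → ℝ) (v : ℝ) (P : ℕ) (z : ℝ) : ℝ :=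
  gsmooth σ v z -
    ∑ ν ∈ Finset.range (P + 1),
      iteratedDeriv ν (gsmooth σ v) 0 / (ν.factorial : ℝ) * z ^ ν

/-- The signed cube average `E_y ∏ y_i (∑ a_i y_i + c)^ν`. -/
def Hav (k ν : ℕ) (a : Fin k → ℝ) (c : ℝ) : ℝ :=
  bExp k fun x => (∏ i, bsign (x i)) * (∑ i, a i * bsign (x i) + c) ^ ν

theorem Hav_zero (ν : ℕ) (a : Fin 0 → ℝ) (c : ℝ) : Hav 0 ν a c = c ^ ν := by
  simp [Hav, bExp]

theorem Hav_succ (k ν : ℕ) (a : Fin (k + 1) → ℝ) (c : ℝ) :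
    Hav (k + 1) ν a c = ∑ m ∈ Finset.range (ν + 1),
      ((a 0 ^ m - (-a 0) ^ m) / 2) * (ν.choose m : ℝ) *
        Hav k (ν - m) (fun i => a i.succ) c := by
  have h1 : ∀ g : (Fin (k + 1) → Bool) → ℝ, ∑ x, g x =
      ∑ y : Fin k → Bool, (g (Fin.cons true y) + g (Fin.cons false y)) := by
    intro g
    rw [← (Fin.consEquiv (fun _ : Fin (k + 1) => Bool)).sum_comp, Fintype.sum_prod_type]
    simp [Fin.consEquiv, Finset.sum_add_distrib]
  unfold Hav bExp
  rw [h1]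
  simp only [Fin.prod_univ_succ, Fin.sum_univ_succ, Fin.cons_zero, Fin.cons_succ, bsign]
  simp only [if_true, Bool.false_eq_true, if_false]
  have h2 : ∀ y : Fin k → Bool,
      (1 * ∏ i, (if y i = true then (1 : ℝ) else -1)) *
        (a 0 * 1 + ∑ i : Fin k, a i.succ * (if y i = true then (1 : ℝ) else -1) + c) ^ ν +
      (-1 * ∏ i, (if y i = true then (1 : ℝ) else -1)) *
        (a 0 * -1 + ∑ i : Fin k, a i.succ * (if y i = true then (1 : ℝ) else -1) + c) ^ ν
      = ∑ m ∈ Finset.range (ν + 1), (a 0 ^ m - (-a 0) ^ m) * (ν.choose m : ℝ) *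
        ((∏ i, (if y i = true then (1 : ℝ) else -1)) *
        (∑ i : Fin k, a i.succ * (if y i = true then (1 : ℝ) else -1) + c) ^ (ν - m)) := by
    intro y
    rw [add_assoc (a 0 * 1), add_assoc (a 0 * -1), add_pow, add_pow, Finset.mul_sum,
      Finset.mul_sum, ← Finset.sum_add_distrib]
    refine Finset.sum_congr rfl fun m _ => ?_
    rw [mul_one, mul_neg_one]
    ring
  rw [Finset.sum_congr rfl fun y _ => h2 y, Finset.sum_comm, Finset.sum_div]
  refine Finset.sum_congr rfl fun m _ => ?_
  rw [← Finset.mul_sum, pow_succ]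
  field_simp

theorem Hav_eq_zero (k : ℕ) : ∀ (ν : ℕ) (a : Fin k → ℝ) (c : ℝ), ν < k → Hav k ν a c = 0 := by
  induction k with
  | zero => intro ν a c h; omega
  | succ k ih =>
    intro ν a c h
    rw [Hav_succ]
    refine Finset.sum_eq_zero fun m hm => ?_
    rcases Nat.eq_zero_or_pos m with rfl | hm0
    · simp
    · have := Finset.mem_range.1 hm
      rw [ih _ _ _ (by omega), mul_zero]

theorem coef_nonneg {a : ℝ} (ha : 0 < a) (m : ℕ) : 0 ≤ (a ^ m - (-a) ^ m) / 2 := by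
  rcases Nat.even_or_odd m with h | h
  · simp [h.neg_pow]
  · rw [h.neg_pow]
    have := pow_pos ha m
    linarith

theorem Hav_nonneg_pos (k : ℕ) : ∀ (ν : ℕ) (a : Fin k → ℝ) (c : ℝ), (∀ i, 0 < a i) → 0 < c →
    0 ≤ Hav k ν a c ∧ (k ≤ ν → 0 < Hav k ν a c) := by
  induction k with
  | zero =>
    intro ν a c _ hc
    rw [Hav_zero]
    exact ⟨(pow_pos hc _).le, fun _ => pow_pos hc _⟩
  | succ k ih =>
    intro ν a c ha hc
    rw [Hav_succ]
    have hn : ∀ m ∈ Finset.range (ν + 1), 0 ≤ ((a 0 ^ m - (-a 0) ^ m) / 2) * (ν.choose m : ℝ) *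
        Hav k (ν - m) (fun i => a i.succ) c := fun m _ =>
      mul_nonneg (mul_nonneg (coef_nonneg (ha 0) m) (Nat.cast_nonneg _))
        (ih _ _ _ (fun i => ha i.succ) hc).1
    refine ⟨Finset.sum_nonneg hn, fun h => Finset.sum_pos' hn ⟨1, ?_, ?_⟩⟩
    · rw [Finset.mem_range]; omega
    · refine mul_pos (mul_pos ?_ ?_) ((ih _ _ _ (fun i => ha i.succ) hc).2 (by omega))
      · have := ha 0
        simp only [pow_one]
        linarith
      · rw [Nat.choose_one_right]
        exact_mod_cast (by omega : 0 < ν)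

theorem IsSign.sq {s : ℝ} (h : IsSign s) : s * s = 1 := by
  rcases h with h | h <;> rw [h] <;> norm_num

theorem IsSign.pow_even {s : ℝ} (h : IsSign s) (m : ℕ) : s ^ (2 * m) = 1 := by
  rw [pow_mul, pow_two, h.sq, one_pow]

theorem Hav_sign (k : ℕ) : ∀ (ν : ℕ) (a τ : Fin k → ℝ) (c s : ℝ), (∀ i, IsSign (τ i)) →
    IsSign s → Hav k ν (fun i => τ i * a i) (s * c) = (∏ i, τ i) * s ^ (ν + k) * Hav k ν a c := by
  induction k with
  | zero =>
    intro ν a τ c s _ _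
    simp [Hav_zero, mul_pow]
  | succ k ih =>
    intro ν a τ c s hτ hs
    rw [Hav_succ, Hav_succ, Finset.mul_sum, Fin.prod_univ_succ]
    refine Finset.sum_congr rfl fun m hm => ?_
    have hm' := Finset.mem_range.1 hm
    rw [ih (ν - m) (fun i => a i.succ) (fun i => τ i.succ) c s (fun i => hτ i.succ) hs]
    rcases Nat.even_or_odd m with h | h
    · simp [h.neg_pow]
    · obtain ⟨j, rfl⟩ := h
      have e : s ^ (ν + (k + 1)) = s ^ (ν - (2 * j + 1) + k) := by
        rw [show ν + (k + 1) = (ν - (2 * j + 1) + k) + 2 * (j + 1) by omega, pow_add _ _ (2 * _),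
          hs.pow_even, mul_one]
      have e2 : τ 0 ^ (2 * j + 1) = τ 0 := by
        rw [pow_succ, (hτ 0).pow_even, one_mul]
      have o : Odd (2 * j + 1) := ⟨j, rfl⟩
      rw [e, o.neg_pow, o.neg_pow, mul_pow, e2]
      ring

theorem Hav_smul (k ν : ℕ) (a : Fin k → ℝ) (c r : ℝ) :
    Hav k ν (fun i => r * a i) (r * c) = r ^ ν * Hav k ν a c := by
  unfold Hav bExp
  rw [mul_div_assoc', Finset.mul_sum]
  congr 1
  refine Finset.sum_congr rfl fun x _ => ?_
  have : ∑ i, r * a i * bsign (x i) + r * c = r * (∑ i, a i * bsign (x i) + c) := by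
    rw [mul_add, Finset.mul_sum]
    simp only [mul_assoc]
  beta_reduce
  rw [this, mul_pow]
  ring

theorem condMoment_eq (n k : ℕ) (τ : Fin k → ℝ) (s : ℝ) (ν : ℕ) (hτ : ∀ i, IsSign (τ i))
    (hs : IsSign s) : condMoment n k τ s ν =
      (∏ i, τ i) * s ^ (ν + k) * ∫ g, Hav k ν (fun i => |g.1 i|) |g.2| ∂weightMeasure n k := by
  rw [← integral_const_mul]
  unfold condMoment condExpFn
  refine integral_congr_ae (Filter.Eventually.of_forall fun g => ?_)
  exact Hav_sign k ν (fun i => |g.1 i|) τ |g.2| s hτ hs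

theorem gaussian_scale (n : ℕ) : gaussianReal 0 (n : ℝ≥0)⁻¹ =
    (gaussianReal 0 ((1 : ℕ) : ℝ≥0)⁻¹).map (fun x => (Real.sqrt n)⁻¹ * x) := by
  rw [gaussianReal_map_const_mul]
  congr 1
  · simp
  · ext
    simp

theorem weightMeasure_scale (n k : ℕ) : weightMeasure n k =
    (weightMeasure 1 k).map (Prod.map (fun w i => (Real.sqrt n)⁻¹ * w i)
      (fun x => (Real.sqrt n)⁻¹ * x)) := by
  unfold weightMeasure
  rw [← Measure.map_prod_map _ _ (by fun_prop) (by fun_prop)]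
  have : IsProbabilityMeasure ((gaussianReal 0 ((1 : ℕ) : ℝ≥0)⁻¹).map
      (fun x => (Real.sqrt n)⁻¹ * x)) := by
    rw [← gaussian_scale]; infer_instance
  rw [Measure.pi_map_pi (f := fun _ x => (Real.sqrt n)⁻¹ * x) (fun i => by fun_prop),
    ← gaussian_scale]

theorem Hav_measurable (k ν : ℕ) : Measurable
    (fun g : (Fin k → ℝ) × ℝ => Hav k ν (fun i => |g.1 i|) |g.2|) := by
  unfold Hav bExp
  fun_prop

theorem integral_scale (n k ν : ℕ) :
    ∫ g, Hav k ν (fun i => |g.1 i|) |g.2| ∂weightMeasure n k =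
      (Real.sqrt n)⁻¹ ^ ν * ∫ g, Hav k ν (fun i => |g.1 i|) |g.2| ∂weightMeasure 1 k := by
  rw [weightMeasure_scale n, integral_map (by fun_prop)
    (Hav_measurable k ν).aestronglyMeasurable, ← integral_const_mul]
  refine integral_congr_ae (Filter.Eventually.of_forall fun g => ?_)
  have hp : 0 ≤ (Real.sqrt n)⁻¹ := by positivity
  simp only [Prod.map_fst, Prod.map_snd, abs_mul, abs_of_nonneg hp]
  exact Hav_smul k ν _ _ _

instance (n k : ℕ) : IsProbabilityMeasure (weightMeasure n k) := by
  unfold weightMeasure; infer_instance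

theorem Hav_integrable (n k ν : ℕ) : Integrable
    (fun g : (Fin k → ℝ) × ℝ => Hav k ν (fun i => |g.1 i|) |g.2|) (weightMeasure n k) := by
  have hid : MemLp (id : ℝ → ℝ) (ν : ℝ≥0∞) (gaussianReal 0 (n : ℝ≥0)⁻¹) :=
    memLp_id_gaussianReal' _ (by simp)
  have hb : MemLp (fun g : (Fin k → ℝ) × ℝ => g.2) (ν : ℝ≥0∞) (weightMeasure n k) :=
    hid.comp_measurePreserving measurePreserving_snd
  have hw : ∀ i, MemLp (fun g : (Fin k → ℝ) × ℝ => g.1 i) (ν : ℝ≥0∞) (weightMeasure n k) :=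
    fun i => hid.comp_measurePreserving
      ((measurePreserving_eval (fun _ : Fin k => gaussianReal 0 (n : ℝ≥0)⁻¹) i).comp
        measurePreserving_fst)
  unfold Hav bExp
  refine Integrable.div_const (integrable_finsetSum _ fun x _ => Integrable.const_mul ?_ _) _
  have hm : MemLp (fun g : (Fin k → ℝ) × ℝ => ∑ i, |g.1 i| * bsign (x i) + |g.2|) (ν : ℝ≥0∞)
      (weightMeasure n k) :=
    (memLp_finsetSum _ fun i _ => (hw i).abs.mul_const _).add hb.abs
  refine (hm.integrable_norm_pow').mono' (by fun_prop) (Filter.Eventually.of_forall fun g => ?_)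
  rw [norm_pow]

theorem integral_Hav_pos (k ν : ℕ) (h : k ≤ ν) :
    0 < ∫ g, Hav k ν (fun i => |g.1 i|) |g.2| ∂weightMeasure 1 k := by
  have : NullSingletonClass (gaussianReal 0 ((1 : ℕ) : ℝ≥0)⁻¹) :=
    nullSingletonClass_gaussianReal (by simp)
  have h1 : ∀ᵐ g ∂weightMeasure 1 k, ∀ i, g.1 i ≠ 0 := by
    rw [ae_all_iff]
    intro i
    exact measurePreserving_fst.quasiMeasurePreserving.ae
      (Measure.ae_eval_ne (fun _ : Fin k => gaussianReal 0 ((1 : ℕ) : ℝ≥0)⁻¹) i 0)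
  have h2 : ∀ᵐ g ∂weightMeasure 1 k, g.2 ≠ 0 :=
    measurePreserving_snd.quasiMeasurePreserving.ae
      (Measure.ae_ne (gaussianReal 0 ((1 : ℕ) : ℝ≥0)⁻¹) 0)
  have hp : ∀ᵐ g ∂weightMeasure 1 k, 0 < Hav k ν (fun i => |g.1 i|) |g.2| := by
    filter_upwards [h1, h2] with g hg1 hg2
    exact (Hav_nonneg_pos k ν _ _ (fun i => abs_pos.2 (hg1 i)) (abs_pos.2 hg2)).2 h
  rw [integral_pos_iff_support_of_nonneg_ae (hp.mono fun g hg => hg.le) (Hav_integrable 1 k ν)]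
  have : weightMeasure 1 k (Function.support
      fun g : (Fin k → ℝ) × ℝ => Hav k ν (fun i => |g.1 i|) |g.2|) = 1 := by
    rw [← measure_univ (μ := weightMeasure 1 k)]
    refine measure_congr ?_
    filter_upwards [hp] with g hg
    exact propext ⟨fun _ => trivial, fun _ => hg.ne'⟩
  rw [this]
  exact one_pos

/-- Conditional moments of `M_k(x) · G^ν` given the signs of the weights and
bias: the expectation vanishes for `ν < k`, and for `ν ≥ k` it equals
`(∏ τ_i) · s^{(ν-k) mod 2} · C(ν) · n^{-ν/2}` with `C(ν) > 0` independent of `n` and of the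
signs. -/
theorem condMoment_formula (k : ℕ) (hk : 1 ≤ k) (ν : ℕ) :
    (ν < k → ∀ n : ℕ, k ≤ n → ∀ τ : Fin k → ℝ, (∀ i, IsSign (τ i)) →
      ∀ s : ℝ, IsSign s → condMoment n k τ s ν = 0) ∧
    (k ≤ ν → ∃ C : ℝ, 0 < C ∧ ∀ n : ℕ, k ≤ n →
      ∀ τ : Fin k → ℝ, (∀ i, IsSign (τ i)) → ∀ s : ℝ, IsSign s →
        condMoment n k τ s ν =
          (∏ i, τ i) * s ^ ((ν - k) % 2) * C * (n : ℝ) ^ (-(ν : ℝ) / 2)) := by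
  refine ⟨fun h n _ τ hτ s hs => ?_, fun h =>
    ⟨∫ g, Hav k ν (fun i => |g.1 i|) |g.2| ∂weightMeasure 1 k, integral_Hav_pos k ν h, ?_⟩⟩
  · rw [condMoment_eq n k τ s ν hτ hs]
    simp [Hav_eq_zero k ν _ _ h]
  · intro n hn τ hτ s hs
    rw [condMoment_eq n k τ s ν hτ hs, integral_scale]
    have e1 : s ^ (ν + k) = s ^ ((ν - k) % 2) := by
      rw [show ν + k = (ν - k) % 2 + 2 * ((ν - k) / 2 + k) by omega, pow_add, hs.pow_even, mul_one]
    have e2 : (Real.sqrt n)⁻¹ ^ ν = (n : ℝ) ^ (-(ν : ℝ) / 2) := by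
      have hn0 : (0 : ℝ) ≤ n := Nat.cast_nonneg n
      rw [Real.sqrt_eq_rpow, ← Real.rpow_neg hn0, ← Real.rpow_natCast, ← Real.rpow_mul hn0]
      congr 1
      ring
    rw [e1, e2]
    ring
end
end

section
/- Let σ : ℝ → ℝ be measurable and polynomially bounded, fix k ≥ 1 and P ≥ k, and for n ≥ 2k set Σ_n := Σ_{1-k/n} and let R_{P,n}(z) := Σ_n(z) − Σ_{ν=0}^P (Σ_n^{(ν)}(0)/ν!)·z^ν be the degree-P Taylor remainder of Σ_n at 0. Let w_1,…,w_k, b be i.i.d. N(0,1/n), x uniform on {±1}^k, G = Σ_{i=1}^k w_i x_i + b, M(x) = ∏_{i=1}^k x_i. Then, conditionally on any fixed values of sign(w_1),…,sign(w_k), sign(b), the conditional expectation over |w_1|,…,|w_k|, |b|, x satisfies E[M(x)·R_{P,n}(G)] = O(n^{-P/2 - 1/2}), uniformly over the conditioned signs. -/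
open MeasureTheory ProbabilityTheory Filter Finset Asymptotics
open scoped NNReal ENNReal

noncomputable section

lemma aux_exp_abs (a y : ℝ) (ha : 0 ≤ a) :
    Real.exp (a * |y|) ≤ Real.exp (a * y) + Real.exp (-a * y) := by
  rcases abs_cases y with ⟨h, _⟩ | ⟨h, _⟩ <;> rw [h]
  · linarith [Real.exp_pos (-a * y)]
  · have : a * -y = -a * y := by ring
    rw [this]; linarith [Real.exp_pos (a * y)]

lemma aux_int_exp_abs (v : ℝ≥0) (a : ℝ) :
    Integrable (fun y => Real.exp (a * y) + Real.exp (-a * y)) (gaussianReal 0 v) :=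
  (integrable_exp_mul_gaussianReal _).add (integrable_exp_mul_gaussianReal _)

lemma aux_integral_exp (v : ℝ≥0) (a : ℝ) :
    ∫ y, (Real.exp (a * y) + Real.exp (-a * y)) ∂(gaussianReal 0 v) =
      2 * Real.exp (v * a ^ 2 / 2) := by
  rw [integral_add (integrable_exp_mul_gaussianReal _) (integrable_exp_mul_gaussianReal _)]
  have h : ∀ t : ℝ, ∫ y, Real.exp (t * y) ∂(gaussianReal 0 v) = Real.exp (v * t ^ 2 / 2) := by
    intro t
    have := congrFun (mgf_id_gaussianReal (μ := 0) (v := v)) t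
    simpa [mgf] using this
  rw [h, h]; ring_nf

lemma aux_poly_exp {σ : ℝ → ℝ} (hpb : PolyBounded σ) :
    ∃ A : ℝ, 0 < A ∧ ∀ y, |σ y| ≤ A * Real.exp |y| := by
  obtain ⟨C, hC, c, hc, h⟩ := hpb
  refine ⟨C * (c.factorial + 1), by positivity, fun y => (h y).trans ?_⟩
  have h1 : |y| ^ c / c.factorial ≤ Real.exp |y| := Real.pow_div_factorial_le_exp _ (abs_nonneg y) c
  have h2 : 1 ≤ Real.exp |y| := Real.one_le_exp (abs_nonneg y)
  rw [div_le_iff₀ (by positivity)] at h1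
  nlinarith

/-- auxiliary integral -/
def auxI (σ : ℝ → ℝ) (v : ℝ≥0) (z : ℂ) : ℂ :=
  ∫ y, (σ y : ℂ) * Complex.exp (z * y) ∂(gaussianReal 0 v)

lemma aux_norm_cexp (z : ℂ) (y : ℝ) : ‖Complex.exp (z * y)‖ ≤ Real.exp (‖z‖ * |y|) := by
  rw [Complex.norm_exp]
  apply Real.exp_le_exp.2
  calc (z * y).re ≤ ‖z * y‖ := Complex.re_le_norm _
    _ = _ := by simp

lemma auxI_bound {σ : ℝ → ℝ} {A : ℝ} (hA0 : 0 < A) (hA : ∀ y, |σ y| ≤ A * Real.exp |y|)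
    (v : ℝ≥0) (z : ℂ) (r : ℝ) (hz : ‖z‖ ≤ r) :
    ‖auxI σ v z‖ ≤ A * (2 * Real.exp (v * (r + 1) ^ 2 / 2)) := by
  rw [← aux_integral_exp, ← integral_const_mul]
  refine norm_integral_le_of_norm_le ((aux_int_exp_abs v _).const_mul A) (ae_of_all _ fun y => ?_)
  have hr : 0 ≤ r := (norm_nonneg z).trans hz
  calc ‖(σ y : ℂ) * Complex.exp (z * y)‖ ≤ (A * Real.exp |y|) * Real.exp (‖z‖ * |y|) := by
        rw [norm_mul]
        gcongr
        · simpa using hA y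
        · exact aux_norm_cexp z y
    _ ≤ (A * Real.exp |y|) * Real.exp (r * |y|) := by gcongr
    _ = A * Real.exp ((r + 1) * |y|) := by rw [mul_assoc, ← Real.exp_add]; ring_nf
    _ ≤ _ := by gcongr; exact aux_exp_abs _ _ (by linarith)

lemma auxI_diff {σ : ℝ → ℝ} (hm : Measurable σ) {A : ℝ} (hA0 : 0 < A)
    (hA : ∀ y, |σ y| ≤ A * Real.exp |y|)
    (v : ℝ≥0) : Differentiable ℂ (auxI σ v) := by
  intro z
  have key : ∀ x ∈ Metric.ball z 1, ∀ y : ℝ, ‖(σ y : ℂ) * (Complex.exp (x * y) * y)‖ ≤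
      A * (Real.exp ((‖z‖ + 3) * y) + Real.exp (-(‖z‖ + 3) * y)) := by
    intro x hx y
    have hx' : ‖x‖ ≤ ‖z‖ + 1 := by
      have : ‖x - z‖ < 1 := by simpa [dist_eq_norm] using hx
      have := norm_le_norm_add_norm_sub' x z
      linarith
    have hy : |y| ≤ Real.exp |y| := by linarith [Real.add_one_le_exp |y|]
    calc ‖(σ y : ℂ) * (Complex.exp (x * y) * y)‖
        ≤ (A * Real.exp |y|) * (Real.exp (‖x‖ * |y|) * Real.exp |y|) := by
          rw [norm_mul, norm_mul]
          gcongr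
          · simpa using hA y
          · exact aux_norm_cexp x y
          · simpa using hy
      _ ≤ (A * Real.exp |y|) * (Real.exp ((‖z‖ + 1) * |y|) * Real.exp |y|) := by gcongr
      _ = A * Real.exp ((‖z‖ + 3) * |y|) := by
          rw [mul_assoc, ← Real.exp_add, ← Real.exp_add]; ring_nf
      _ ≤ _ := by gcongr; exact aux_exp_abs _ _ (by positivity)
  have := hasDerivAt_integral_of_dominated_loc_of_deriv_le (μ := gaussianReal 0 v)
    (F := fun (x : ℂ) (y : ℝ) => (σ y : ℂ) * Complex.exp (x * y))
    (F' := fun (x : ℂ) (y : ℝ) => (σ y : ℂ) * (Complex.exp (x * y) * y))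
    (s := Metric.ball z 1) (x₀ := z)
    (bound := fun y => A * (Real.exp ((‖z‖ + 3) * y) + Real.exp (-(‖z‖ + 3) * y)))
    (Metric.ball_mem_nhds z one_pos)
    (Eventually.of_forall fun x => by
      apply Measurable.aestronglyMeasurable
      fun_prop) ?_ ?_
    (ae_of_all _ fun y x hx => key x hx y) ((aux_int_exp_abs v _).const_mul A)
    (ae_of_all _ fun y x hx => ?_)
  · exact this.2.differentiableAt
  · refine Integrable.mono' ((aux_int_exp_abs v (‖z‖ + 1)).const_mul A)
      (by apply Measurable.aestronglyMeasurable; fun_prop) (ae_of_all _ fun y => ?_)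
    calc ‖(σ y : ℂ) * Complex.exp (z * y)‖ ≤ (A * Real.exp |y|) * Real.exp (‖z‖ * |y|) := by
          rw [norm_mul]
          gcongr
          · simpa using hA y
          · exact aux_norm_cexp z y
      _ = A * Real.exp ((‖z‖ + 1) * |y|) := by rw [mul_assoc, ← Real.exp_add]; ring_nf
      _ ≤ _ := by gcongr; exact aux_exp_abs _ _ (by positivity)
  · apply Measurable.aestronglyMeasurable
    fun_prop
  · have h1 : HasDerivAt (fun x : ℂ => x * (y : ℂ)) (y : ℂ) x := by
      simpa using (hasDerivAt_id x).mul_const (y : ℂ)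
    exact h1.cexp.const_mul _

/-- entire extension -/
def auxF (σ : ℝ → ℝ) (v : ℝ≥0) (z : ℂ) : ℂ :=
  Complex.exp (-z ^ 2 / (2 * (v : ℝ))) * auxI σ v (z / (v : ℝ))

lemma auxF_diff {σ : ℝ → ℝ} (hm : Measurable σ) {A : ℝ} (hA0 : 0 < A)
    (hA : ∀ y, |σ y| ≤ A * Real.exp |y|)
    (v : ℝ≥0) : Differentiable ℂ (auxF σ v) := by
  unfold auxF
  have := (auxI_diff hm hA0 hA v).comp (g := auxI σ v) (f := fun z : ℂ => z / ((v : ℝ) : ℂ))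
    (by fun_prop)
  refine Differentiable.mul (by fun_prop) this

lemma auxF_bound {σ : ℝ → ℝ} {A : ℝ} (hA0 : 0 < A) (hA : ∀ y, |σ y| ≤ A * Real.exp |y|)
    (v : ℝ≥0) (hv : 1 / 2 ≤ (v : ℝ)) (hv1 : (v : ℝ) ≤ 1) (z : ℂ) (hz : ‖z‖ ≤ 2) :
    ‖auxF σ v z‖ ≤ Real.exp 4 * (A * (2 * Real.exp (25 / 2))) := by
  unfold auxF
  rw [norm_mul]
  gcongr
  · rw [Complex.norm_exp]
    apply Real.exp_le_exp.2
    refine (Complex.re_le_norm _).trans ?_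
    have : ‖-z ^ 2 / (2 * ((v : ℝ) : ℂ))‖ = ‖z‖ ^ 2 / (2 * v) := by simp
    rw [this, div_le_iff₀ (by linarith)]
    nlinarith [norm_nonneg z]
  · refine (auxI_bound hA0 hA v _ 4 ?_).trans ?_
    · have : ‖z / ((v : ℝ) : ℂ)‖ = ‖z‖ / v := by simp
      rw [this, div_le_iff₀ (by linarith)]
      linarith
    · gcongr
      nlinarith

lemma auxF_real {σ : ℝ → ℝ} (hm : Measurable σ) (v : ℝ≥0) (hv : v ≠ 0) (t : ℝ) :
    auxF σ v t = (gsmooth σ v t : ℂ) := by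
  have h0 : gsmooth σ v t = ∫ y, σ y ∂(gaussianReal t v) := by
    have := gaussianReal_map_add_const (μ := 0) (v := v) t
    rw [zero_add] at this
    rw [← this, integral_map (by fun_prop) hm.aestronglyMeasurable]
    simp [gsmooth]
  rw [h0, ← integral_complex_ofReal, auxF, auxI, integral_gaussianReal_eq_integral_smul hv,
    integral_gaussianReal_eq_integral_smul hv, ← integral_const_mul]
  congr 1
  ext y
  have hv' : (v : ℝ) ≠ 0 := by simpa using hv
  have : gaussianPDFReal t v y =
      Real.exp (-t ^ 2 / (2 * v)) * (gaussianPDFReal 0 v y * Real.exp (t / v * y)) := by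
    unfold gaussianPDFReal
    have h1 : -(y - t) ^ 2 / (2 * (v : ℝ)) =
        -t ^ 2 / (2 * v) + (-(y - 0) ^ 2 / (2 * v) + t / v * y) := by
      field_simp
      ring
    rw [h1, Real.exp_add, Real.exp_add]
    ring
  rw [this, Complex.real_smul, Complex.real_smul]
  push_cast
  ring

lemma aux_iter {F : ℂ → ℂ} (hF : Differentiable ℂ F) {f : ℝ → ℝ} (h : ∀ t : ℝ, F t = f t)
    (m : ℕ) : iteratedDeriv m f = fun t : ℝ => (iteratedDeriv m F t).re := by
  induction m with
  | zero => ext t; simp [h]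
  | succ m ih =>
    ext t
    rw [iteratedDeriv_succ, ih, iteratedDeriv_succ]
    apply HasDerivAt.deriv
    apply HasDerivAt.real_of_complex
    apply DifferentiableAt.hasDerivAt
    exact (hF.contDiff (n := ⊤)).differentiable_iteratedDeriv m (by simp) _

lemma aux_taylor {F : ℂ → ℂ} (hF : Differentiable ℂ F) {B : ℝ}
    (hB : ∀ z, ‖z‖ ≤ 2 → ‖F z‖ ≤ B) (P : ℕ) (z : ℂ) (hz : ‖z‖ ≤ 1) :
    ‖F z - ∑ ν ∈ range (P + 1), iteratedDeriv ν F 0 / (ν.factorial : ℂ) * z ^ ν‖ ≤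
      2 * B * ‖z‖ ^ (P + 1) := by
  have hB0 : 0 ≤ B := (norm_nonneg _).trans (hB 0 (by simp))
  have hs := Complex.hasSum_taylorSeries_of_entire hF 0 z
  have hs' : HasSum (fun ν : ℕ => iteratedDeriv ν F 0 / (ν.factorial : ℂ) * z ^ ν) (F z) := by
    have he : (fun ν : ℕ => iteratedDeriv ν F 0 / (ν.factorial : ℂ) * z ^ ν) =
        fun n : ℕ => (n.factorial : ℂ)⁻¹ • (z - 0) ^ n • iteratedDeriv n F 0 := by
      ext n
      simp only [smul_eq_mul, sub_zero]
      ring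
    rw [he]; exact hs
  have ht := (hasSum_nat_add_iff' (P + 1)).2 hs'
  rw [← ht.tsum_eq]
  refine tsum_of_norm_bounded (g := fun n => B * ‖z‖ ^ (P + 1) * (1 / 2) ^ n) ?_ fun i => ?_
  · have := hasSum_geometric_two.mul_left (B * ‖z‖ ^ (P + 1))
    have e : B * ‖z‖ ^ (P + 1) * 2 = 2 * B * ‖z‖ ^ (P + 1) := by ring
    rwa [e] at this
  · have hc := Complex.norm_iteratedDeriv_le_of_forall_mem_sphere_norm_le (c := 0) (R := 2) (C := B)
      (i + (P + 1)) (by norm_num) hF.diffContOnCl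
      (fun w hw => hB w (by simpa using (mem_sphere_zero_iff_norm.1 hw).le))
    rw [norm_mul, norm_div, norm_pow, Complex.norm_natCast]
    have hf : (0 : ℝ) < (i + (P + 1)).factorial := by positivity
    calc _ ≤ ((i + (P + 1)).factorial * B / 2 ^ (i + (P + 1))) / (i + (P + 1)).factorial *
          ‖z‖ ^ (i + (P + 1)) := by gcongr
      _ = B * ‖z‖ ^ (P + 1) * (1 / 2) ^ i * ((1 / 2) ^ (P + 1) * ‖z‖ ^ i) := by
          rw [mul_div_assoc, mul_div_cancel_left₀ _ hf.ne', one_div, inv_pow, inv_pow, pow_add,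
            pow_add ‖z‖]
          field_simp
      _ ≤ B * ‖z‖ ^ (P + 1) * (1 / 2) ^ i * 1 := by
          gcongr
          exact mul_le_one₀ (pow_le_one₀ (by norm_num) (by norm_num)) (by positivity)
            (pow_le_one₀ (by positivity) hz)
      _ = _ := by ring

lemma aux_moment (v : ℝ≥0) (m : ℕ) :
    ∫ y, |y| ^ m ∂(gaussianReal 0 v) = (Real.sqrt v) ^ m * ∫ y, |y| ^ m ∂(gaussianReal 0 1) := by
  have h : gaussianReal 0 v = (gaussianReal 0 1).map (Real.sqrt v * ·) := by
    rw [gaussianReal_map_const_mul]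
    congr 1
    · simp
    · ext; simp
  rw [h, integral_map (by fun_prop) (by fun_prop), ← integral_const_mul]
  congr 1; ext y
  rw [abs_mul, mul_pow, abs_of_nonneg (Real.sqrt_nonneg _)]

lemma aux_moment_int (v : ℝ≥0) (m : ℕ) : Integrable (fun y => |y| ^ m) (gaussianReal 0 v) :=
  integrable_pow_abs_of_integrable_exp_mul (t := 1) (X := id) one_ne_zero
    (integrable_exp_mul_gaussianReal _) (integrable_exp_mul_gaussianReal _) m

lemma aux_sum_pow (k : ℕ) (a : Fin k → ℝ) (b : ℝ) (ha : ∀ i, 0 ≤ a i) (hb : 0 ≤ b) (m : ℕ) :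
    (∑ i, a i + b) ^ m ≤ (k + 1 : ℝ) ^ m * (∑ i, a i ^ m + b ^ m) := by
  obtain ⟨j, hj⟩ := Finite.exists_max (fun o : Option (Fin k) => o.elim b a)
  have hj0 : 0 ≤ j.elim b a := by cases j <;> simp [ha, hb]
  have h1 : ∑ i, a i + b ≤ (k + 1) * j.elim b a := by
    have h2 : ∑ i, a i ≤ ∑ i : Fin k, j.elim b a := Finset.sum_le_sum fun i _ => hj (some i)
    have h3 : b ≤ j.elim b a := hj none
    simp at h2
    linarith
  have h0 : 0 ≤ ∑ i, a i := Finset.sum_nonneg fun i _ => ha i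
  have h0' : ∀ i ∈ (univ : Finset (Fin k)), 0 ≤ a i ^ m := fun i _ => pow_nonneg (ha i) _
  calc _ ≤ ((k + 1) * j.elim b a) ^ m := by gcongr
    _ = (k + 1 : ℝ) ^ m * (j.elim b a) ^ m := mul_pow _ _ _
    _ ≤ _ := by
      gcongr
      cases j with
      | none => simpa using Finset.sum_nonneg h0'
      | some i =>
        have := Finset.single_le_sum h0' (Finset.mem_univ i)
        have := pow_nonneg hb m
        simp only [Option.elim]
        linarith

lemma aux_rem {σ : ℝ → ℝ} (hm : Measurable σ) (hpb : PolyBounded σ) (P : ℕ) :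
    ∃ K : ℝ, 0 < K ∧ ∃ q : ℕ, P + 1 ≤ q ∧ ∀ v : ℝ≥0, 1 / 2 ≤ (v : ℝ) → (v : ℝ) ≤ 1 → ∀ z : ℝ,
      |taylorRem σ v P z| ≤ K * (|z| ^ (P + 1) + |z| ^ q) := by
  obtain ⟨A, hA0, hA⟩ := aux_poly_exp hpb
  obtain ⟨C, hC, c, hc, hσ⟩ := hpb
  set B := Real.exp 4 * (A * (2 * Real.exp (25 / 2))) with hBdef
  have hB0 : 0 < B := by positivity
  set M := ∫ y, |y| ^ c ∂(gaussianReal 0 1) with hM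
  have hM0 : 0 ≤ M := integral_nonneg fun y => by positivity
  refine ⟨2 * B + (C * (2 ^ c * (M + 1)) + C + (P + 1) * B), by positivity, P + 1 + c, by omega, ?_⟩
  intro v hv hv1 z
  have hv0 : v ≠ 0 := by
    rintro rfl
    norm_num at hv
  have hF := auxF_diff hm hA0 hA v
  have hFB : ∀ z : ℂ, ‖z‖ ≤ 2 → ‖auxF σ v z‖ ≤ B := fun z hz => auxF_bound hA0 hA v hv hv1 z hz
  have hR := auxF_real hm v hv0
  have hit : ∀ m, iteratedDeriv m (gsmooth σ v) 0 = (iteratedDeriv m (auxF σ v) 0).re := by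
    intro m
    have := congrFun (aux_iter hF hR m) 0
    simpa using this
  rcases le_or_gt |z| 1 with hz | hz
  · have h1 := aux_taylor hF hFB P z (by simpa using hz)
    have h2 : taylorRem σ v P z = (auxF σ v z - ∑ ν ∈ range (P + 1),
        iteratedDeriv ν (auxF σ v) 0 / (ν.factorial : ℂ) * (z : ℂ) ^ ν).re := by
      rw [taylorRem, Complex.sub_re, Complex.re_sum, hR, Complex.ofReal_re]
      congr 1
      refine Finset.sum_congr rfl fun ν _ => ?_
      rw [hit, ← Complex.ofReal_pow, Complex.re_mul_ofReal, Complex.div_natCast_re]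
    rw [h2]
    refine (Complex.abs_re_le_norm _).trans (h1.trans ?_)
    have h3 : ‖(z : ℂ)‖ = |z| := by simp
    rw [h3]
    gcongr
    · have : 0 ≤ C * (2 ^ c * (M + 1)) + C + (P + 1) * B := by positivity
      linarith
    · have : 0 ≤ |z| ^ (P + 1 + c) := by positivity
      linarith
  · have hq : ∀ j ≤ P + 1 + c, |z| ^ j ≤ |z| ^ (P + 1 + c) := fun j hj =>
      pow_le_pow_right₀ hz.le hj
    set Z := |z| ^ (P + 1 + c) with hZ
    have hZ1 : 1 ≤ Z := one_le_pow₀ hz.le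
    have h1 : |gsmooth σ v z| ≤ (C * (2 ^ c * (M + 1)) + C) * Z := by
      have hi : Integrable (fun y : ℝ => C * (2 ^ c * (|y| ^ c + |z| ^ c)) + C) (gaussianReal 0 v) :=
        (((((aux_moment_int v c).add (integrable_const _)).const_mul _).const_mul _).add
          (integrable_const _))
      have h2 : |gsmooth σ v z| ≤ ∫ y, (C * (2 ^ c * (|y| ^ c + |z| ^ c)) + C) ∂(gaussianReal 0 v) := by
        rw [gsmooth, Real.toNNReal_coe, ← Real.norm_eq_abs]
        refine norm_integral_le_of_norm_le hi (ae_of_all _ fun y => ?_)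
        refine (hσ _).trans ?_
        gcongr
        have h3 := aux_sum_pow 1 (fun _ => |y|) |z| (fun _ => abs_nonneg _) (abs_nonneg _) c
        norm_num at h3
        exact (pow_le_pow_left₀ (abs_nonneg _) (abs_add_le y z) c).trans h3
      refine h2.trans ?_
      have hi' : Integrable (fun y : ℝ => C * (2 ^ c * (|y| ^ c + |z| ^ c))) (gaussianReal 0 v) :=
        ((((aux_moment_int v c).add (integrable_const _)).const_mul _).const_mul _)
      rw [integral_add hi' (integrable_const _), integral_const_mul, integral_const_mul,
          integral_add (aux_moment_int v c) (integrable_const _), aux_moment, ← hM]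
      simp only [integral_const, probReal_univ, one_smul]
      have h4 : Real.sqrt v ^ c ≤ 1 :=
        pow_le_one₀ (Real.sqrt_nonneg _) (Real.sqrt_le_one.2 hv1)
      have h5 : Real.sqrt v ^ c * M ≤ M * Z := by
        calc _ ≤ 1 * M := by gcongr
          _ ≤ M * Z := by nlinarith
      have h6 := hq c (by omega)
      calc _ ≤ C * (2 ^ c * (M * Z + Z)) + C * Z := by gcongr; nlinarith
        _ = _ := by ring
    have h2 : |∑ ν ∈ range (P + 1),
        iteratedDeriv ν (gsmooth σ v) 0 / (ν.factorial : ℝ) * z ^ ν| ≤ (P + 1) * B * Z := by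
      refine (Finset.abs_sum_le_sum_abs _ _).trans ?_
      have : ∀ ν ∈ range (P + 1), |iteratedDeriv ν (gsmooth σ v) 0 / (ν.factorial : ℝ) * z ^ ν| ≤
          B * Z := by
        intro ν hν
        have hν' : ν ≤ P + 1 + c := by have := Finset.mem_range.1 hν; omega
        rw [abs_mul, abs_pow]
        gcongr
        · rw [abs_div, Nat.abs_cast, div_le_iff₀ (by positivity), hit]
          refine (Complex.abs_re_le_norm _).trans ?_
          have hcc := Complex.norm_iteratedDeriv_le_of_forall_mem_sphere_norm_le (c := 0) (R := 1)
            (C := B) ν (by norm_num) hF.diffContOnCl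
            (fun w hw => hFB w (by rw [mem_sphere_zero_iff_norm.1 hw]; norm_num))
          simp at hcc
          linarith
        · exact hq ν hν'
      refine (Finset.sum_le_sum this).trans ?_
      simp [mul_assoc]
    have h3 : |taylorRem σ v P z| ≤ _ := abs_sub _ _
    have h4 : 0 ≤ |z| ^ (P + 1) := by positivity
    refine (h3.trans (add_le_add h1 h2)).trans ?_
    have h5 : 0 ≤ (2 * B + (C * (2 ^ c * (M + 1)) + C + (P + 1) * B)) * |z| ^ (P + 1) := by
      positivity
    have h6 : 0 ≤ 2 * B * Z := by positivity
    linarith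

/-- sum of absolute values -/
def auxS (k : ℕ) (g : (Fin k → ℝ) × ℝ) : ℝ := ∑ i, |g.1 i| + |g.2|

instance aux_prob (n k : ℕ) : IsProbabilityMeasure (weightMeasure n k) := by
  unfold weightMeasure; infer_instance

lemma aux_weight (n k m : ℕ) :
    Integrable (fun g : (Fin k → ℝ) × ℝ => ∑ i, |g.1 i| ^ m + |g.2| ^ m) (weightMeasure n k) ∧
    ∫ g, (∑ i, |g.1 i| ^ m + |g.2| ^ m) ∂(weightMeasure n k) =
      (k + 1) * ((Real.sqrt (n : ℝ)⁻¹) ^ m * ∫ y, |y| ^ m ∂(gaussianReal 0 1)) := by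
  set ν : Measure ℝ := gaussianReal 0 (n : ℝ≥0)⁻¹ with hν
  have hmom : ∫ y, |y| ^ m ∂ν =
      (Real.sqrt (n : ℝ)⁻¹) ^ m * ∫ y, |y| ^ m ∂(gaussianReal 0 1) := by
    rw [hν, aux_moment]; simp
  have hint : Integrable (fun y => |y| ^ m) ν := aux_moment_int _ m
  have hp : ∀ i, MeasurePreserving (fun g : (Fin k → ℝ) × ℝ => g.1 i) (weightMeasure n k) ν :=
    fun i => (measurePreserving_eval (fun _ : Fin k => ν) i).comp measurePreserving_fst
  have hp2 : MeasurePreserving (fun g : (Fin k → ℝ) × ℝ => g.2) (weightMeasure n k) ν :=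
    measurePreserving_snd
  have hi : ∀ i, Integrable (fun g : (Fin k → ℝ) × ℝ => |g.1 i| ^ m) (weightMeasure n k) :=
    fun i => (hp i).integrable_comp_of_integrable hint
  have hi2 : Integrable (fun g : (Fin k → ℝ) × ℝ => |g.2| ^ m) (weightMeasure n k) :=
    hp2.integrable_comp_of_integrable hint
  have e1 : ∀ i, ∫ g : (Fin k → ℝ) × ℝ, |g.1 i| ^ m ∂(weightMeasure n k) = ∫ y, |y| ^ m ∂ν := by
    intro i
    rw [← (hp i).map_eq, integral_map (hp i).aemeasurable (by fun_prop)]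
  have e2 : ∫ g : (Fin k → ℝ) × ℝ, |g.2| ^ m ∂(weightMeasure n k) = ∫ y, |y| ^ m ∂ν := by
    rw [← hp2.map_eq, integral_map hp2.aemeasurable (by fun_prop)]
  refine ⟨(integrable_finsetSum _ fun i _ => hi i).add hi2, ?_⟩
  rw [integral_add (integrable_finsetSum _ fun i _ => hi i) hi2,
    integral_finsetSum _ fun i _ => hi i, e2]
  simp only [e1, hmom]
  simp
  ring

lemma aux_bsign (b : Bool) : |bsign b| = 1 := by cases b <;> simp [bsign]

lemma aux_sign {s : ℝ} (h : IsSign s) : |s| = 1 := by rcases h with rfl | rfl <;> simp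

lemma aux_Gval (k : ℕ) (τ : Fin k → ℝ) (hτ : ∀ i, IsSign (τ i)) (s : ℝ) (hs : IsSign s)
    (g : (Fin k → ℝ) × ℝ) (x : Fin k → Bool) : |Gval k τ s g x| ≤ auxS k g := by
  unfold Gval auxS
  refine (abs_add_le _ _).trans (add_le_add ((Finset.abs_sum_le_sum_abs _ _).trans
    (Finset.sum_le_sum fun i _ => ?_)) ?_)
  · simp [abs_mul, aux_bsign, aux_sign (hτ i)]
  · simp [abs_mul, aux_sign hs]

lemma aux_bExp (k : ℕ) (f : (Fin k → Bool) → ℝ) (D : ℝ) (h : ∀ x, |f x| ≤ D) :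
    |bExp k f| ≤ D := by
  unfold bExp
  rw [abs_div, abs_of_pos (by positivity : (0 : ℝ) < 2 ^ k), div_le_iff₀ (by positivity)]
  refine (Finset.abs_sum_le_sum_abs _ _).trans ((Finset.sum_le_sum fun x _ => h x).trans ?_)
  simp [mul_comm]

/-- Taylor remainder term: for measurable, polynomially bounded `σ`,
`k ≥ 1`, `P ≥ k`, with `Σ_n := Σ_{1-k/n}` and `R_{P,n}` its degree-`P` Taylor remainder at `0`,
conditionally on any fixed signs, `E[M_k(x) · R_{P,n}(G)] = O(n^{-P/2 - 1/2})`, uniformly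
over the signs. -/
theorem taylor_remainder_term
    (σ : ℝ → ℝ) (hmeas : Measurable σ) (hpb : PolyBounded σ)
    (k P : ℕ) (hk : 1 ≤ k) (hkP : k ≤ P) :
    ∃ C₀ : ℝ, 0 < C₀ ∧ ∃ n₀ : ℕ, ∀ n : ℕ, n₀ ≤ n → 2 * k ≤ n →
      ∀ τ : Fin k → ℝ, (∀ i, IsSign (τ i)) → ∀ s : ℝ, IsSign s →
        |condExpFn n k τ s (taylorRem σ (1 - (k : ℝ) / n) P)| ≤
          C₀ * (n : ℝ) ^ (-(P : ℝ) / 2 - 1 / 2) := by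
  obtain ⟨K, hK, q, hq, hrem⟩ := aux_rem hmeas hpb P
  set Mo : ℕ → ℝ := fun m => ∫ y, |y| ^ m ∂(gaussianReal 0 1) with hMo
  have hMo0 : ∀ m, 0 ≤ Mo m := fun m => integral_nonneg fun y => by positivity
  set D : ℕ → ℝ := fun m => (k + 1 : ℝ) ^ m * ((k + 1) * Mo m) with hD
  have hD0 : ∀ m, 0 ≤ D m := fun m => by have := hMo0 m; positivity
  refine ⟨K * (D (P + 1) + D q) + 1, ?_, 1, ?_⟩
  · have := hD0 (P + 1)
    have := hD0 q
    positivity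
  intro n hn hkn τ hτ s hs
  have hn0 : (0 : ℝ) < n := by exact_mod_cast hn
  have hkn' : 2 * (k : ℝ) ≤ n := by exact_mod_cast hkn
  have hv0 : (k : ℝ) / n ≤ 1 / 2 := by rw [div_le_iff₀ hn0]; linarith
  have hv1 : 0 ≤ (k : ℝ) / n := by positivity
  obtain ⟨v, hv⟩ : ∃ v : ℝ≥0, (v : ℝ) = 1 - (k : ℝ) / n := ⟨⟨1 - (k : ℝ) / n, by linarith⟩, rfl⟩
  rw [← hv]
  have hr := hrem v (by linarith) (by linarith)
  set T : ℕ → (Fin k → ℝ) × ℝ → ℝ := fun m g => ∑ i, |g.1 i| ^ m + |g.2| ^ m with hT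
  set r : ℝ := Real.sqrt (n : ℝ)⁻¹ with hrdef
  have hr0 : 0 ≤ r := Real.sqrt_nonneg _
  have hr1 : r ≤ 1 := by
    apply Real.sqrt_le_one.2
    apply inv_le_one_of_one_le₀
    exact_mod_cast hn
  have hTi : ∀ m, Integrable (T m) (weightMeasure n k) := fun m => (aux_weight n k m).1
  have hTe : ∀ m, ∫ g, T m g ∂(weightMeasure n k) = (k + 1) * (r ^ m * Mo m) :=
    fun m => (aux_weight n k m).2
  have hmain : |condExpFn n k τ s (taylorRem σ v P)| ≤
      ∫ g, K * ((k + 1 : ℝ) ^ (P + 1) * T (P + 1) g + (k + 1 : ℝ) ^ q * T q g)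
        ∂(weightMeasure n k) := by
    rw [condExpFn, ← Real.norm_eq_abs]
    refine norm_integral_le_of_norm_le
      ((((hTi _).const_mul _).add ((hTi _).const_mul _)).const_mul _) (ae_of_all _ fun g => ?_)
    apply aux_bExp
    intro x
    have hG := aux_Gval k τ hτ s hs g x
    rw [abs_mul, Finset.abs_prod]
    simp only [aux_bsign, Finset.prod_const_one, one_mul]
    refine (hr _).trans ?_
    have hS : ∀ m, |Gval k τ s g x| ^ m ≤ (k + 1 : ℝ) ^ m * T m g := fun m =>
      (pow_le_pow_left₀ (abs_nonneg _) hG m).trans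
        (aux_sum_pow k (fun i => |g.1 i|) |g.2| (fun _ => abs_nonneg _) (abs_nonneg _) m)
    have ha := hS (P + 1)
    have hb := hS q
    gcongr
  refine hmain.trans ?_
  rw [integral_const_mul, integral_add ((hTi _).const_mul _) ((hTi _).const_mul _),
    integral_const_mul, integral_const_mul, hTe, hTe]
  have hpow : (n : ℝ) ^ (-(P : ℝ) / 2 - 1 / 2) = r ^ (P + 1) := by
    rw [hrdef, Real.sqrt_eq_rpow, ← Real.rpow_natCast, ← Real.rpow_mul (by positivity),
      Real.inv_rpow hn0.le, ← Real.rpow_neg hn0.le]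
    congr 1
    push_cast
    ring
  rw [hpow]
  have hqr : r ^ q ≤ r ^ (P + 1) := pow_le_pow_of_le_one hr0 hr1 hq
  have h1 : (k + 1 : ℝ) ^ (P + 1) * ((k + 1) * (r ^ (P + 1) * Mo (P + 1))) =
      D (P + 1) * r ^ (P + 1) := by simp only [hD]; ring
  have h2 : (k + 1 : ℝ) ^ q * ((k + 1) * (r ^ q * Mo q)) = D q * r ^ q := by simp only [hD]; ring
  rw [h1, h2]
  have h3 : D q * r ^ q ≤ D q * r ^ (P + 1) := mul_le_mul_of_nonneg_left hqr (hD0 q)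
  have h4 : 0 ≤ r ^ (P + 1) := by positivity
  calc _ ≤ K * (D (P + 1) * r ^ (P + 1) + D q * r ^ (P + 1)) := by gcongr
    _ ≤ _ := by linarith
end
end

section
/- In the setting above (σ measurable and polynomially bounded, k ≥ 1, P ≥ k, Σ_n := Σ_{1-k/n}, R_{P,n} its degree-P Taylor remainder at 0, G = Σ_{i=1}^k w_i x_i + b with w_i, b i.i.d. N(0,1/n) and x uniform on {±1}^k, conditioning on the signs of the weights and bias): for any constant D > 0, the conditional expectation E[|R_{P,n}(G)|·1(|G| ≤ D)] = O(n^{-(P+1)/2}), uniformly over the conditioned signs. -/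
open MeasureTheory ProbabilityTheory Filter Finset Asymptotics
open scoped NNReal ENNReal

noncomputable section

/-- Complexified Gaussian kernel times the activation. -/
def kerC (σ : ℝ → ℝ) (v : ℝ) (z : ℂ) (u : ℝ) : ℂ :=
  Complex.exp (-((u : ℂ) - z) ^ 2 / (2 * (v : ℂ))) * (σ u : ℂ)

lemma norm_kerC_le (σ : ℝ → ℝ) (v : ℝ) (hv : 1 / 2 ≤ v) (hv1 : v ≤ 1) (R : ℝ) (z : ℂ)
    (hz : ‖z‖ ≤ R) (u : ℝ) :
    ‖kerC σ v z u‖ ≤ Real.exp (R ^ 2) * (Real.exp (-(1 / 4) * u ^ 2) * |σ u|) := by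
  have hv0 : 0 < v := by linarith
  rw [kerC, norm_mul, Complex.norm_real, Real.norm_eq_abs, ← mul_assoc, ← Real.exp_add,
    Complex.norm_exp]
  gcongr
  have e : (-((u : ℂ) - z) ^ 2 / (2 * (v : ℂ))) = ((1 / (2 * v) : ℝ) : ℂ) * (-((u : ℂ) - z) ^ 2) := by
    push_cast
    ring
  rw [e, Complex.re_ofReal_mul]
  have e2 : (-((u : ℂ) - z) ^ 2).re = -(u - z.re) ^ 2 + z.im ^ 2 := by
    simp [pow_two]
    ring
  rw [e2]
  have hn : z.re ^ 2 + z.im ^ 2 ≤ R ^ 2 := by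
    have h1 : ‖z‖ ^ 2 ≤ R ^ 2 := by gcongr
    rw [Complex.sq_norm, Complex.normSq_apply] at h1
    nlinarith
  have h2 : 1 / (2 * v) ≤ 1 := by
    rw [div_le_one (by positivity)]; linarith
  have h3 : 1 / 2 ≤ 1 / (2 * v) := by
    apply one_div_le_one_div_of_le (by positivity); linarith
  set a := 1 / (2 * v)
  have h4 : a * z.im ^ 2 ≤ z.im ^ 2 := by nlinarith [sq_nonneg z.im]
  have h5 : 1 / 2 * (u - z.re) ^ 2 ≤ a * (u - z.re) ^ 2 := by nlinarith [sq_nonneg (u - z.re)]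
  nlinarith [sq_nonneg (u - 2 * z.re), sq_nonneg z.re]

lemma pow_gauss_integrable (m : ℕ) :
    Integrable (fun u : ℝ => |u| ^ m * Real.exp (-(1 / 4) * u ^ 2)) := by
  have h := integrable_rpow_mul_exp_neg_mul_sq (b := 1 / 4) (by norm_num) (s := (m : ℝ))
    (by have : (0 : ℝ) ≤ m := Nat.cast_nonneg m
        linarith)
  refine h.norm.congr (Filter.Eventually.of_forall fun u => ?_)
  simp [Real.rpow_natCast, Real.norm_eq_abs, abs_mul, abs_pow]

lemma sigma_gauss_integrable (σ : ℝ → ℝ) (hmeas : Measurable σ) (hpb : PolyBounded σ) (m : ℕ) :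
    Integrable (fun u : ℝ => |u| ^ m * (Real.exp (-(1 / 4) * u ^ 2) * |σ u|)) := by
  obtain ⟨C, hC, c, hc, hb⟩ := hpb
  have h1 := ((pow_gauss_integrable (m + c)).const_mul C).add
    ((pow_gauss_integrable m).const_mul C)
  refine h1.mono' (by fun_prop) (Filter.Eventually.of_forall fun u => ?_)
  rw [Real.norm_of_nonneg (by positivity)]
  have : |u| ^ m * (Real.exp (-(1 / 4) * u ^ 2) * |σ u|) ≤
      |u| ^ m * (Real.exp (-(1 / 4) * u ^ 2) * (C * |u| ^ c + C)) := by
    gcongr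
    exact hb u
  refine this.trans (le_of_eq ?_)
  simp only [Pi.add_apply]
  ring

lemma kerC_meas (σ : ℝ → ℝ) (hmeas : Measurable σ) (v : ℝ) (z : ℂ) : Measurable (kerC σ v z) := by
  unfold kerC
  fun_prop

lemma kerC_integrable (σ : ℝ → ℝ) (hmeas : Measurable σ) (hpb : PolyBounded σ)
    (v : ℝ) (hv : 1 / 2 ≤ v) (hv1 : v ≤ 1) (z : ℂ) : Integrable (kerC σ v z) := by
  have h := (sigma_gauss_integrable σ hmeas hpb 0).const_mul (Real.exp (‖z‖ ^ 2))
  refine h.mono' (kerC_meas σ hmeas v z).aestronglyMeasurable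
    (Filter.Eventually.of_forall fun u => ?_)
  simpa using norm_kerC_le σ v hv hv1 ‖z‖ z le_rfl u

/-- Entire extension of the smoothing. -/
def FC (σ : ℝ → ℝ) (v : ℝ) (z : ℂ) : ℂ :=
  (((Real.sqrt (2 * Real.pi * v))⁻¹ : ℝ) : ℂ) * ∫ u : ℝ, kerC σ v z u

lemma FC_differentiable (σ : ℝ → ℝ) (hmeas : Measurable σ) (hpb : PolyBounded σ)
    (v : ℝ) (hv : 1 / 2 ≤ v) (hv1 : v ≤ 1) : Differentiable ℂ (FC σ v) := by
  have hv0 : 0 < v := by linarith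
  intro z₀
  unfold FC
  refine DifferentiableAt.const_mul ?_ _
  set R := ‖z₀‖ + 1
  have hR : 0 < R := by positivity
  have hint : Integrable (fun u : ℝ => (2 * (|u| + R)) *
      (Real.exp (R ^ 2) * (Real.exp (-(1 / 4) * u ^ 2) * |σ u|))) := by
    have h1 := ((sigma_gauss_integrable σ hmeas hpb 1).const_mul (2 * Real.exp (R ^ 2))).add
      ((sigma_gauss_integrable σ hmeas hpb 0).const_mul (2 * R * Real.exp (R ^ 2)))
    refine h1.congr (Filter.Eventually.of_forall fun u => ?_)
    simp only [Pi.add_apply]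
    ring
  refine (hasDerivAt_integral_of_dominated_loc_of_deriv_le (𝕜 := ℂ) (μ := volume)
    (F := kerC σ v) (F' := fun z u => (((u : ℂ) - z) / v) * kerC σ v z u)
    (s := Metric.ball z₀ 1) (x₀ := z₀) (Metric.ball_mem_nhds z₀ one_pos)
    (Filter.Eventually.of_forall fun z => (kerC_meas σ hmeas v z).aestronglyMeasurable)
    (kerC_integrable σ hmeas hpb v hv hv1 z₀) ?_ ?_ hint ?_).2.differentiableAt
  · have := kerC_meas σ hmeas v z₀
    exact Measurable.aestronglyMeasurable (by fun_prop)
  · refine Filter.Eventually.of_forall fun u z hz => ?_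
    have hzR : ‖z‖ ≤ R := by
      have h1 : ‖z - z₀‖ < 1 := by simpa [dist_eq_norm] using hz
      have h2 : ‖z‖ ≤ ‖z - z₀‖ + ‖z₀‖ := by simpa using norm_add_le (z - z₀) z₀
      simp only [R]; linarith
    rw [norm_mul]
    refine mul_le_mul ?_ (norm_kerC_le σ v hv hv1 R z hzR u) (norm_nonneg _) (by positivity)
    rw [norm_div, Complex.norm_real, Real.norm_of_nonneg hv0.le, div_le_iff₀ hv0]
    have h3 : ‖(u : ℂ) - z‖ ≤ |u| + R := by
      refine (norm_sub_le _ _).trans ?_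
      rw [Complex.norm_real, Real.norm_eq_abs]
      gcongr
    have h4 : 0 ≤ |u| + R := by positivity
    nlinarith
  · refine Filter.Eventually.of_forall fun u z hz => ?_
    unfold kerC
    have hvc : (v : ℂ) ≠ 0 := by exact_mod_cast hv0.ne'
    have h1 : HasDerivAt (fun z : ℂ => -((u : ℂ) - z) ^ 2 / (2 * (v : ℂ))) (((u : ℂ) - z) / v) z := by
      have h := ((((hasDerivAt_id z).const_sub (u : ℂ)).pow 2).neg).div_const (2 * (v : ℂ))
      refine HasDerivAt.congr_deriv h ?_
      simp
      field_simp
    have h2 := (h1.cexp).mul_const (σ u : ℂ)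
    refine HasDerivAt.congr_deriv h2 ?_
    ring

lemma norm_FC_le (σ : ℝ → ℝ) (hmeas : Measurable σ) (hpb : PolyBounded σ)
    (v : ℝ) (hv : 1 / 2 ≤ v) (hv1 : v ≤ 1) (R : ℝ) (z : ℂ) (hz : ‖z‖ ≤ R) :
    ‖FC σ v z‖ ≤ Real.exp (R ^ 2) * ∫ u : ℝ, Real.exp (-(1 / 4) * u ^ 2) * |σ u| := by
  have hv0 : 0 < v := by linarith
  rw [FC, norm_mul, Complex.norm_real, Real.norm_of_nonneg (by positivity)]
  have h1 : (Real.sqrt (2 * Real.pi * v))⁻¹ ≤ 1 := by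
    apply inv_le_one_of_one_le₀
    rw [Real.one_le_sqrt]
    nlinarith [Real.pi_gt_three]
  have h2 : ‖∫ u : ℝ, kerC σ v z u‖ ≤
      ∫ u : ℝ, Real.exp (R ^ 2) * (Real.exp (-(1 / 4) * u ^ 2) * |σ u|) := by
    refine norm_integral_le_of_norm_le ?_
      (Filter.Eventually.of_forall fun u => norm_kerC_le σ v hv hv1 R z hz u)
    simpa using (sigma_gauss_integrable σ hmeas hpb 0).const_mul (Real.exp (R ^ 2))
  rw [integral_const_mul] at h2
  calc _ ≤ 1 * ‖∫ u : ℝ, kerC σ v z u‖ := by gcongr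
    _ ≤ _ := by rw [one_mul]; exact h2

lemma FC_ofReal (σ : ℝ → ℝ) (v : ℝ) (hv : 0 < v) (t : ℝ) :
    FC σ v (t : ℂ) = ((gsmooth σ v t : ℝ) : ℂ) := by
  have hv' : v.toNNReal ≠ 0 := by simpa using hv
  rw [gsmooth, integral_gaussianReal_eq_integral_smul hv', FC]
  have h := integral_add_right_eq_self (μ := volume)
    (fun u : ℝ => gaussianPDFReal 0 v.toNNReal (u - t) * σ u) t
  simp only [add_sub_cancel_right] at h
  simp only [smul_eq_mul]
  rw [h, ← integral_const_mul, ← integral_complex_ofReal]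
  congr 1
  ext u
  simp only [kerC, gaussianPDFReal, sub_zero, Real.coe_toNNReal _ hv.le]
  push_cast
  ring

lemma iteratedDeriv_gsmooth (σ : ℝ → ℝ) (hmeas : Measurable σ) (hpb : PolyBounded σ)
    (v : ℝ) (hv : 1 / 2 ≤ v) (hv1 : v ≤ 1) (m : ℕ) :
    iteratedDeriv m (gsmooth σ v) = fun t : ℝ => (iteratedDeriv m (FC σ v) (t : ℂ)).re := by
  induction m with
  | zero =>
    ext t
    simp [FC_ofReal σ v (by linarith) t]
  | succ m ih =>
    ext t
    rw [iteratedDeriv_succ, ih]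
    have hd : Differentiable ℂ (iteratedDeriv m (FC σ v)) :=
      (FC_differentiable σ hmeas hpb v hv hv1).contDiff.differentiable_iteratedDeriv m
        (WithTop.coe_lt_top (m : ℕ∞))
    rw [iteratedDeriv_succ]
    exact ((hd (t : ℂ)).hasDerivAt.real_of_complex).deriv

lemma taylorRem_bound (σ : ℝ → ℝ) (hmeas : Measurable σ) (hpb : PolyBounded σ)
    (P : ℕ) (D : ℝ) (hD : 0 < D) :
    ∃ B : ℝ, 0 < B ∧ ∀ v : ℝ, 1 / 2 ≤ v → v ≤ 1 → ∀ z : ℝ, |z| ≤ D →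
      |taylorRem σ v P z| ≤ B * |z| ^ (P + 1) := by
  set M := Real.exp ((2 * D) ^ 2) * ∫ u : ℝ, Real.exp (-(1 / 4) * u ^ 2) * |σ u| with hM
  have hM0 : 0 ≤ M := mul_nonneg (Real.exp_pos _).le (integral_nonneg fun u => by positivity)
  refine ⟨2 * M / (2 * D) ^ (P + 1) + 1, by positivity, fun v hv hv1 z hz => ?_⟩
  have hd := FC_differentiable σ hmeas hpb v hv hv1
  have hs := Complex.hasSum_taylorSeries_of_entire hd 0 (z : ℂ)
  set a : ℕ → ℂ := fun n =>
    ((n.factorial : ℂ))⁻¹ • ((z : ℂ) - 0) ^ n • iteratedDeriv n (FC σ v) 0 with ha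
  have hbd : ∀ n, ‖a n‖ ≤ M * (|z| / (2 * D)) ^ n := by
    intro n
    have h := Complex.norm_iteratedDeriv_le_of_forall_mem_sphere_norm_le (c := 0) (R := 2 * D)
      (C := M) n (by positivity) hd.diffContOnCl (fun w hw => by
        refine norm_FC_le σ hmeas hpb v hv hv1 (2 * D) w ?_
        simpa using (le_of_eq (mem_sphere_zero_iff_norm.1 hw)))
    have hf : (0 : ℝ) < n.factorial := by exact_mod_cast n.factorial_pos
    simp only [ha, sub_zero, norm_smul, norm_inv, norm_pow, Complex.norm_real, Real.norm_eq_abs,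
      Complex.norm_natCast]
    calc _ ≤ ((n.factorial : ℝ))⁻¹ * (|z| ^ n * (n.factorial * M / (2 * D) ^ n)) := by gcongr
      _ = _ := by
        rw [div_pow]
        field_simp
  have hq : |z| / (2 * D) ≤ 1 / 2 := by
    rw [div_le_iff₀ (by positivity)]; linarith
  have hq0 : 0 ≤ |z| / (2 * D) := by positivity
  set q := |z| / (2 * D) with hqd
  have htail := (hasSum_nat_add_iff' (P + 1)).2 hs
  have hgeo : HasSum (fun n : ℕ => M * q ^ (n + (P + 1))) (M * q ^ (P + 1) * (1 - q)⁻¹) := by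
    have := (hasSum_geometric_of_lt_one hq0 (by linarith)).mul_left (M * q ^ (P + 1))
    refine this.congr_fun ?_
    intro n
    ring
  have hle := tsum_of_norm_bounded hgeo (fun n => hbd (n + (P + 1)))
  rw [htail.tsum_eq] at hle
  have hre : taylorRem σ v P z = (FC σ v z - ∑ i ∈ Finset.range (P + 1), a i).re := by
    rw [taylorRem, Complex.sub_re, Complex.re_sum, FC_ofReal σ v (by linarith), Complex.ofReal_re]
    congr 1
    refine Finset.sum_congr rfl fun n _ => ?_
    rw [iteratedDeriv_gsmooth σ hmeas hpb v hv hv1 n]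
    have : a n = (((n.factorial : ℝ)⁻¹ * z ^ n : ℝ) : ℂ) * iteratedDeriv n (FC σ v) 0 := by
      simp only [ha, sub_zero, smul_eq_mul]
      push_cast
      ring
    rw [this, Complex.re_ofReal_mul]
    simp only [Complex.ofReal_zero]
    ring
  rw [hre]
  refine (Complex.abs_re_le_norm _).trans (hle.trans ?_)
  have hinv : (1 - q)⁻¹ ≤ 2 := by
    rw [inv_le_comm₀ (by linarith) (by norm_num)]; linarith
  calc M * q ^ (P + 1) * (1 - q)⁻¹ ≤ M * q ^ (P + 1) * 2 := by gcongr
    _ = (2 * M / (2 * D) ^ (P + 1)) * |z| ^ (P + 1) := by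
        rw [hqd, div_pow]; ring
    _ ≤ _ := by
        gcongr
        linarith

lemma gauss_abs_pow_integrable (v : ℝ≥0) (m : ℕ) :
    Integrable (fun y : ℝ => |y| ^ m) (gaussianReal 0 v) := by
  have h := (memLp_id_gaussianReal (μ := 0) (v := v) (m : ℝ≥0)).integrable_norm_pow'
  simpa using h

lemma gauss_abs_pow_integral (n : ℕ) (hn : 0 < n) (m : ℕ) :
    ∫ y, |y| ^ m ∂ gaussianReal 0 (n : ℝ≥0)⁻¹ =
      (n : ℝ) ^ (-(m : ℝ) / 2) * ∫ y, |y| ^ m ∂ gaussianReal 0 1 := by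
  have hn' : (0 : ℝ) < n := by exact_mod_cast hn
  have h := gaussianReal_map_const_mul (μ := 0) (v := 1) (Real.sqrt n)⁻¹
  have e : (NNReal.mk (((Real.sqrt n)⁻¹) ^ 2) (sq_nonneg _) * 1 : ℝ≥0) = (n : ℝ≥0)⁻¹ := by
    ext
    simp [Real.sq_sqrt hn'.le]
  rw [e, mul_zero] at h
  rw [← h, integral_map (by fun_prop) (by fun_prop), ← integral_const_mul]
  congr 1
  ext y
  rw [abs_mul, mul_pow, abs_of_nonneg (by positivity)]
  congr 1
  rw [Real.sqrt_eq_rpow, ← Real.rpow_neg hn'.le, ← Real.rpow_natCast, ← Real.rpow_mul hn'.le]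
  congr 1
  ring

lemma abs_Gval_pow_le (k P : ℕ) (τ : Fin k → ℝ) (hτ : ∀ i, IsSign (τ i)) (s : ℝ) (hs : IsSign s)
    (g : (Fin k → ℝ) × ℝ) (x : Fin k → Bool) :
    |Gval k τ s g x| ^ (P + 1) ≤
      ((k : ℝ) + 1) ^ P * (∑ i, |g.1 i| ^ (P + 1) + |g.2| ^ (P + 1)) := by
  have hsg : ∀ r, IsSign r → |r| = 1 := by
    rintro r (rfl | rfl) <;> simp
  have hb : ∀ b, |bsign b| = 1 := by
    intro b; cases b <;> simp [bsign]
  have h1 : |Gval k τ s g x| ≤ ∑ i, |g.1 i| + |g.2| := by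
    unfold Gval
    refine (abs_add_le _ _).trans (add_le_add ((Finset.abs_sum_le_sum_abs _ _).trans ?_) ?_)
    · refine Finset.sum_le_sum fun i _ => ?_
      simp [abs_mul, hsg _ (hτ i), hb]
    · simp [abs_mul, hsg _ hs]
  let f : Option (Fin k) → ℝ := fun o => o.elim |g.2| (fun i => |g.1 i|)
  have h2 := pow_sum_div_card_le_sum_pow (s := (Finset.univ : Finset (Option (Fin k)))) (f := f)
    (fun o _ => by cases o <;> simp [f]) P
  rw [div_le_iff₀ (by simp; positivity)] at h2
  simp only [Fintype.sum_option, Finset.card_univ, Fintype.card_option, Fintype.card_fin, f,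
    Option.elim] at h2
  push_cast at h2
  calc |Gval k τ s g x| ^ (P + 1) ≤ (∑ i, |g.1 i| + |g.2|) ^ (P + 1) := by gcongr
    _ ≤ _ := by
      rw [add_comm (∑ i, |g.1 i|)]
      refine h2.trans (le_of_eq ?_)
      ring

instance weightMeasure_prob (n k : ℕ) : IsProbabilityMeasure (weightMeasure n k) := by
  unfold weightMeasure
  infer_instance

lemma mp_fst (n k : ℕ) (i : Fin k) :
    MeasurePreserving (fun g : (Fin k → ℝ) × ℝ => g.1 i) (weightMeasure n k)
      (gaussianReal 0 (n : ℝ≥0)⁻¹) := by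
  have h1 := measurePreserving_eval (fun _ : Fin k => gaussianReal 0 (n : ℝ≥0)⁻¹) i
  have h2 : MeasurePreserving Prod.fst (weightMeasure n k)
      (Measure.pi fun _ : Fin k => gaussianReal 0 (n : ℝ≥0)⁻¹) := measurePreserving_fst
  exact h1.comp h2

lemma mp_snd (n k : ℕ) :
    MeasurePreserving (fun g : (Fin k → ℝ) × ℝ => g.2) (weightMeasure n k)
      (gaussianReal 0 (n : ℝ≥0)⁻¹) := measurePreserving_snd

lemma mp_int {Ω : Type*} [MeasurableSpace Ω] {μ : Measure Ω} {X : Ω → ℝ} (n : ℕ) (hn : 0 < n)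
    (m : ℕ) (h : MeasurePreserving X μ (gaussianReal 0 (n : ℝ≥0)⁻¹)) :
    Integrable (fun g => |X g| ^ m) μ ∧
    ∫ g, |X g| ^ m ∂μ = (n : ℝ) ^ (-(m : ℝ) / 2) * ∫ y, |y| ^ m ∂ gaussianReal 0 1 := by
  refine ⟨h.integrable_comp_of_integrable (gauss_abs_pow_integrable _ m), ?_⟩
  rw [← gauss_abs_pow_integral n hn m, ← h.map_eq,
    integral_map h.measurable.aemeasurable (by fun_prop)]

lemma bExp_le_const (k : ℕ) (f : (Fin k → Bool) → ℝ) (c : ℝ) (h : ∀ x, f x ≤ c) :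
    bExp k f ≤ c := by
  rw [bExp, div_le_iff₀ (by positivity)]
  refine (Finset.sum_le_sum fun x _ => h x).trans (le_of_eq ?_)
  simp [mul_comm]

/-- Bounded-region part of the remainder: for any constant `D > 0`,
conditionally on any fixed signs,
`E[|R_{P,n}(G)| · 1(|G| ≤ D)] = O(n^{-(P+1)/2})`, uniformly over the signs. -/
theorem remainder_bounded_region
    (σ : ℝ → ℝ) (hmeas : Measurable σ) (hpb : PolyBounded σ)
    (k P : ℕ) (hk : 1 ≤ k) (hkP : k ≤ P) (D : ℝ) (hD : 0 < D) :
    ∃ C₀ : ℝ, 0 < C₀ ∧ ∃ n₀ : ℕ, ∀ n : ℕ, n₀ ≤ n → 2 * k ≤ n →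
      ∀ τ : Fin k → ℝ, (∀ i, IsSign (τ i)) → ∀ s : ℝ, IsSign s →
        (∫ g : (Fin k → ℝ) × ℝ,
            (bExp k fun x =>
              |taylorRem σ (1 - (k : ℝ) / n) P (Gval k τ s g x)| *
                (if |Gval k τ s g x| ≤ D then (1 : ℝ) else 0)) ∂ weightMeasure n k) ≤
          C₀ * (n : ℝ) ^ (-((P : ℝ) + 1) / 2) := by
  obtain ⟨B, hB, hrem⟩ := taylorRem_bound σ hmeas hpb P D hD
  set m₁ := ∫ y, |y| ^ (P + 1) ∂ gaussianReal 0 1 with hm₁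
  have hm0 : 0 ≤ m₁ := integral_nonneg fun y => by positivity
  refine ⟨B * (((k : ℝ) + 1) ^ P * (((k : ℝ) + 1) * m₁)) + 1, by positivity, 0, ?_⟩
  intro n _ hn τ hτ s hs
  have hn0 : 0 < n := by omega
  have hnr : (0 : ℝ) < n := by exact_mod_cast hn0
  have hnk : 2 * (k : ℝ) ≤ n := by exact_mod_cast hn
  have hv : 1 / 2 ≤ 1 - (k : ℝ) / n := by
    have : (k : ℝ) / n ≤ 1 / 2 := by
      rw [div_le_iff₀ hnr]; linarith
    linarith
  have hv1 : 1 - (k : ℝ) / n ≤ 1 := by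
    have : 0 ≤ (k : ℝ) / n := by positivity
    linarith
  have h1 := fun i => mp_int n hn0 (P + 1) (mp_fst n k i)
  have h2 := mp_int n hn0 (P + 1) (mp_snd n k)
  have hsumint : Integrable (fun g : (Fin k → ℝ) × ℝ => ∑ i, |g.1 i| ^ (P + 1))
      (weightMeasure n k) := integrable_finsetSum _ fun i _ => (h1 i).1
  have hint : Integrable (fun g : (Fin k → ℝ) × ℝ =>
      B * (((k : ℝ) + 1) ^ P * (∑ i, |g.1 i| ^ (P + 1) + |g.2| ^ (P + 1))))
      (weightMeasure n k) := ((hsumint.add h2.1).const_mul _).const_mul _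
  refine (integral_mono_of_nonneg (Filter.Eventually.of_forall fun g => ?_) hint
    (Filter.Eventually.of_forall fun g => ?_)).trans ?_
  · refine div_nonneg (Finset.sum_nonneg fun x _ => ?_) (by positivity)
    refine mul_nonneg (abs_nonneg _) ?_
    split_ifs <;> simp
  · refine bExp_le_const _ _ _ fun x => ?_
    have hG := abs_Gval_pow_le k P τ hτ s hs g x
    split_ifs with h
    · rw [mul_one]
      refine (hrem _ hv hv1 _ h).trans ?_
      exact mul_le_mul_of_nonneg_left hG hB.le
    · rw [mul_zero]
      positivity
  · rw [integral_const_mul, integral_const_mul, integral_add hsumint h2.1,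
      integral_finsetSum _ fun i _ => (h1 i).1, h2.2]
    simp only [fun i => (h1 i).2]
    rw [Finset.sum_const, Finset.card_univ, Fintype.card_fin, nsmul_eq_mul, ← hm₁]
    push_cast
    have hp : 0 ≤ (n : ℝ) ^ (-((P : ℝ) + 1) / 2) := by positivity
    nlinarith
end
end
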